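/- Let m and d be integers with 0 ≤ m ≤ d−1, let p be a prime, and for each 0 ≤ ℓ ≤ m let r_ℓ = p^{e_ℓ} be a power of p with integer e_ℓ ≥ 0. Set N_ℓ = (r_ℓ−1)(d+1−m). Assume that p(d−m) is even, or m = 0. Then for every collection of continuous maps f_0: Δ_{N_0} → ℝ^d, …, f_m: Δ_{N_m} → ℝ^d there exist an m-dimensional affine subspace L of ℝ^d and, for each 0 ≤ ℓ ≤ m, r_ℓ pairwise disjoint faces σ_1^ℓ, …, σ_{r_ℓ}^ℓ of Δ_{N_ℓ} such that f_ℓ(σ_j^ℓ) ∩ L ≠ ∅ for all 1 ≤ j ≤ r_ℓ. (The topological transversal Tverberg theorem for prime powers; the case c_0 = ⋯ = c_m = 0 of the constraint topological transversal Tverberg theorem.) -/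

import Mathlib

/-!
Let `q = charDegree p`, which is `1` for `p = 2` and `2` for odd `p`, and suppose first that
`d - m = q * h`. A configuration consists, for each `ℓ`, of a point of the `(N ℓ + 1)`-fold join of
the discrete group `(ZMod p) ^ e ℓ`, and of `h` points of joins of `ZMod p`. A point of the first
kind amounts to `p ^ e ℓ` systems of weights, indexed by the group elements, on disjoint sets of
vertices of the simplex; the homogeneous extension of `f ℓ` assigns to each of them an image point
and a total mass. A point of the second kind gives a nonzero frame vector, real for `p = 2` and
complex for odd `p`, which is read as an affine equation on `ℝ ^ d`. The test maps are the Hermitian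
products of different frame vectors, for odd `p` also all their bilinear products, the Fourier
coefficients of the masses over one of each pair of conjugate nontrivial characters, and the Fourier
coefficients of the pairings of frame vectors with image points. At a common zero all masses in a
simplex are equal, all image points solve the equations given by the frame, and these equations are
independent, so that they define a flat of dimension `m`.

The product `G` of all these groups acts on the configurations, and each test map transforms by a
character of `G`. A common zero exists because the product of the Euler classes of these characters,
a product of linear forms in the polynomial part of `H^*(BG; ZMod p)`, survives in the product of
joins. This is made explicit with affine chains. If there is no common zero, the sectors that
contain the values of the test maps are equivariant labels in `ZMod p`. The cup product of their
carry classes (of their coboundaries for `p = 2`) is an invariant cocycle, and it vanishes on small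
simplices, since near each point one of the labels takes at most two adjacent values (one value for
`p = 2`). Its value on a chain of lattice paths, which is built by shuffles from the periodic
resolutions of the cyclic factors and is a cycle modulo `G`, is a coefficient of the product of
linear forms. The coefficient of the product of the leading terms is nonzero, and barycentric
subdivision does not change the value, so the cocycle is nonzero on arbitrarily small simplices.

If `p` and `d - m` are odd, then `m = 0`. The case of dimension `d + 1`, applied to a map that sends
`p ^ e - 1` additional vertices to the origin and the given simplex to height `1`, then gives a
single point of `ℝ ^ (d + 1)`; one of the faces avoids the additional vertices, so this point has
height `1` and all faces do.
-/

open scoped BigOperators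

noncomputable section

/-- The standard `N`-dimensional simplex, realized in Euclidean space `ℝ^{N+1}`. -/
def stdSimp (N : ℕ) : Set (EuclideanSpace ℝ (Fin (N + 1))) :=
  {x | (∀ i, 0 ≤ x i) ∧ ∑ i, x i = 1}

/-- The face of the standard simplex spanned by the vertex set `S`. -/
def simpFace (N : ℕ) (S : Finset (Fin (N + 1))) : Set (EuclideanSpace ℝ (Fin (N + 1))) :=
  {x ∈ stdSimp N | ∀ i, x i ≠ 0 → i ∈ S}

namespace TransversalTverberg

open Finsupp (single)

/-! ### Affine chains and barycentric subdivision -/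

section Chain

variable {R : Type*} [CommRing R] {E E' M : Type*} [AddCommGroup M] [Module R M]

variable (R E) in
/-- Ordered affine chains: finite `R`-linear combinations of finite sequences of points of `E`. A
sequence of length `n + 1` is an affine `n`-simplex, possibly degenerate; the empty sequence is the
generator in degree `-1`, so that the chain complex is augmented. -/
abbrev Chain := List E →₀ R

lemma hom_congr {F F' : Chain R E →ₗ[R] M} (h : ∀ l, F (single l 1) = F' (single l 1))
    (c : Chain R E) : F c = F' c := by
  have : F = F' := by
    ext l
    exact h l
  rw [this]

/-- The join of the chains with the point `x`: prepend `x` to every simplex. -/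
def cone (x : E) : Chain R E →ₗ[R] Chain R E := Finsupp.lmapDomain R R (List.cons x)

@[simp] lemma cone_single (x : E) (l : List E) (r : R) :
    cone x (single l r) = single (x :: l) r := by
  simp [cone, Finsupp.lmapDomain_apply, Finsupp.mapDomain_single]

variable (R) in
/-- The augmented boundary of one simplex. The recursion is the formula for the boundary of a cone,
so that no alternating sum is needed. -/
def simplexBoundary : List E → Chain R E
  | [] => 0
  | x :: l => single l 1 - cone x (simplexBoundary l)

/-- The augmented boundary operator. -/
def boundary : Chain R E →ₗ[R] Chain R E := Finsupp.linearCombination R (simplexBoundary R)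

@[simp] lemma boundary_single (l : List E) :
    boundary (single l 1 : Chain R E) = simplexBoundary R l := by
  simp [boundary]

lemma boundary_cone (x : E) (c : Chain R E) : boundary (cone x c) = c - cone x (boundary c) :=
  hom_congr (F := boundary ∘ₗ cone x) (F' := LinearMap.id - cone x ∘ₗ boundary)
    (fun l => by simp [simplexBoundary]) c

lemma boundary_simplexBoundary (l : List E) : boundary (simplexBoundary R l) = 0 := by
  induction l with
  | nil => simp [simplexBoundary]
  | cons x l ih => simp [simplexBoundary, boundary_cone, ih]

/-- The map on chains induced by a map of points. -/
def mapChain (f : E → E') : Chain R E →ₗ[R] Chain R E' := Finsupp.lmapDomain R R (List.map f)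

@[simp] lemma mapChain_single (f : E → E') (l : List E) (r : R) :
    mapChain f (single l r) = single (l.map f) r := by
  simp [mapChain, Finsupp.lmapDomain_apply, Finsupp.mapDomain_single]

lemma mapChain_cone (f : E → E') (x : E) (c : Chain R E) :
    mapChain f (cone x c) = cone (f x) (mapChain f c) :=
  hom_congr (F := mapChain f ∘ₗ cone x) (F' := cone (f x) ∘ₗ mapChain f) (fun l => by simp) c

lemma simplexBoundary_map (f : E → E') (l : List E) :
    simplexBoundary R (l.map f) = mapChain f (simplexBoundary R l) := by
  induction l with
  | nil => simp [simplexBoundary]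
  | cons x l ih => simp [simplexBoundary, ih, mapChain_cone]

variable (R) in
/-- The chains all of whose simplices have the property `Q`. -/
abbrev chainsOn (Q : List E → Prop) : Submodule R (Chain R E) := Finsupp.supported R R {l | Q l}

variable {Q Q' : List E → Prop}

lemma chainsOn_mono (h : ∀ l, Q l → Q' l) : chainsOn R Q ≤ chainsOn R Q' :=
  Finsupp.supported_mono (s := {l | Q l}) (t := {l | Q' l}) h

lemma single_mem_chainsOn {l : List E} (h : Q l) : single l 1 ∈ chainsOn R Q :=
  Finsupp.single_mem_supported R 1 h

lemma chainsOn_le {S : Submodule R (Chain R E)} (h : ∀ l, Q l → single l 1 ∈ S) :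
    chainsOn R Q ≤ S := by
  rw [chainsOn, Finsupp.supported_eq_span_single, Submodule.span_le]
  rintro _ ⟨l, hl, rfl⟩
  exact h l hl

lemma map_mem_of_mem_chainsOn {F : Chain R E →ₗ[R] M} {S : Submodule R M}
    (h : ∀ l, Q l → F (single l 1) ∈ S) {c : Chain R E} (hc : c ∈ chainsOn R Q) : F c ∈ S :=
  chainsOn_le (S := S.comap F) h hc

lemma eqOn_chainsOn {F F' : Chain R E →ₗ[R] M}
    (h : ∀ l, Q l → F (single l 1) = F' (single l 1)) : Set.EqOn F F' (chainsOn R Q) :=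
  chainsOn_le (S := LinearMap.eqLocus F F') h

lemma cone_mem_chainsOn {x : E} (h : ∀ l, Q l → Q' (x :: l)) {c : Chain R E}
    (hc : c ∈ chainsOn R Q) : cone x c ∈ chainsOn R Q' :=
  map_mem_of_mem_chainsOn
    (fun l hl => by rw [cone_single]; exact single_mem_chainsOn (h l hl)) hc

lemma simplexBoundary_mem_chainsOn (l : List E) :
    simplexBoundary R l ∈ chainsOn R fun l' => l'.length + 1 = l.length ∧ l' ⊆ l := by
  induction l with
  | nil => exact Submodule.zero_mem _
  | cons x l ih =>
    refine Submodule.sub_mem _ (single_mem_chainsOn (by simp)) (cone_mem_chainsOn ?_ ih)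
    exact fun l' ⟨hlength, hsub⟩ => ⟨by simp [hlength], List.cons_subset_cons x hsub⟩

end Chain

section Hull

variable {E : Type*} [AddCommGroup E] [Module ℝ E]

/-- The affine simplex spanned by the points of `l`. -/
def hull (l : List E) : Set E := convexHull ℝ {x | x ∈ l}

lemma subset_hull {l : List E} {x : E} (hx : x ∈ l) : x ∈ hull l :=
  subset_convexHull ℝ _ hx

lemma hull_subset {l : List E} {S : Set E} (hS : Convex ℝ S) (h : ∀ x ∈ l, x ∈ S) : hull l ⊆ S :=
  convexHull_min h hS

lemma hull_mono {l l' : List E} (h : l' ⊆ l) : hull l' ⊆ hull l :=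
  convexHull_mono fun _ hx => h hx

lemma hull_subset_hull {l l' : List E} (h : ∀ x ∈ l', x ∈ hull l) : hull l' ⊆ hull l :=
  hull_subset (convex_convexHull ℝ _) h

/-- The barycentre of a sequence of points. -/
def barycentre (l : List E) : E := (l.length : ℝ)⁻¹ • l.sum

lemma barycentre_eq_sum (l : List E) :
    barycentre l = ∑ i : Fin l.length, (l.length : ℝ)⁻¹ • l.get i := by
  rw [barycentre, ← Finset.smul_sum, ← List.sum_ofFn, List.ofFn_get]

lemma barycentre_mem_hull {l : List E} (hl : l ≠ []) : barycentre l ∈ hull l := by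
  have hpos : (l.length : ℝ) ≠ 0 := by simpa using hl
  rw [barycentre_eq_sum]
  refine (convex_convexHull ℝ _).sum_mem (fun _ _ => by positivity) (by simp [hpos]) ?_
  exact fun i _ => subset_hull (List.get_mem l i)

lemma sub_barycentre {l : List E} (hl : l ≠ []) (x : E) :
    x - barycentre l = ∑ i : Fin l.length, (l.length : ℝ)⁻¹ • (x - l.get i) := by
  have hpos : (l.length : ℝ) ≠ 0 := by simpa using hl
  simp only [smul_sub, Finset.sum_sub_distrib, barycentre_eq_sum, Finset.sum_const,
    Finset.card_univ, Fintype.card_fin]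
  rw [← Nat.cast_smul_eq_nsmul ℝ, smul_smul, mul_inv_cancel₀ hpos, one_smul]

end Hull

section Distance

variable {E : Type*} [SeminormedAddCommGroup E] [NormedSpace ℝ E]

lemma dist_get_barycentre_le {l : List E} {c : ℝ} (hc : ∀ x ∈ l, ∀ y ∈ l, dist x y ≤ c)
    (j : Fin l.length) : dist (l.get j) (barycentre l) ≤ (1 - (l.length : ℝ)⁻¹) * c := by
  have hlength : 0 < l.length := j.pos
  have hne : l ≠ [] := List.length_pos_iff.1 hlength
  calc dist (l.get j) (barycentre l)
      = ‖∑ i ∈ Finset.univ.erase j, (l.length : ℝ)⁻¹ • (l.get j - l.get i)‖ := by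
        rw [dist_eq_norm, sub_barycentre hne, ← Finset.add_sum_erase _ _ (Finset.mem_univ j),
          sub_self, smul_zero, zero_add]
    _ ≤ ∑ _i ∈ Finset.univ.erase j, (l.length : ℝ)⁻¹ * c := by
        refine norm_sum_le_of_le _ fun i _ => ?_
        rw [norm_smul, Real.norm_of_nonneg (by positivity), ← dist_eq_norm]
        gcongr
        exact hc _ (List.get_mem l j) _ (List.get_mem l i)
    _ = (1 - (l.length : ℝ)⁻¹) * c := by
        rw [Finset.sum_const, Finset.card_erase_of_mem (Finset.mem_univ j), Finset.card_univ,
          Fintype.card_fin, nsmul_eq_mul, Nat.cast_pred hlength]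
        field_simp

lemma dist_barycentre_le {N : ℕ} {l : List E} (hN : l.length ≤ N) {c : ℝ} (hc0 : 0 ≤ c)
    (hc : ∀ x ∈ l, ∀ y ∈ l, dist x y ≤ c) {y : E} (hy : y ∈ hull l) :
    dist y (barycentre l) ≤ (1 - (N : ℝ)⁻¹) * c := by
  refine hull_subset (convex_closedBall (barycentre l) ((1 - (N : ℝ)⁻¹) * c)) ?_ hy
  intro x hx
  obtain ⟨j, rfl⟩ := List.get_of_mem hx
  have hpos : (0 : ℝ) < l.length := by exact_mod_cast j.pos
  refine (dist_get_barycentre_le hc j).trans ?_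
  gcongr

end Distance

section Subdivision

variable {E E' : Type*} [AddCommGroup E] [Module ℝ E] [AddCommGroup E'] [Module ℝ E']
  {R : Type*} [CommRing R]

/-- Barycentric subdivision, truncated after `n` levels of recursion: on simplices with at most `n`
vertices it is the usual barycentric subdivision. -/
def subdivide : ℕ → (Chain R E →ₗ[R] Chain R E)
  | 0 => LinearMap.id
  | n + 1 => Finsupp.linearCombination R fun l =>
      if l = [] then single [] 1 else cone (barycentre l) (subdivide n (simplexBoundary R l))

/-- The chain homotopy between the identity and `subdivide`. -/
def subdivideHomotopy : ℕ → (Chain R E →ₗ[R] Chain R E)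
  | 0 => 0
  | n + 1 => Finsupp.linearCombination R fun l =>
      cone (barycentre l) (single l 1 - subdivide (n + 1) (single l 1)
        - subdivideHomotopy n (simplexBoundary R l))

@[simp] lemma subdivide_zero (c : Chain R E) : subdivide 0 c = c := rfl

@[simp] lemma subdivideHomotopy_zero (c : Chain R E) : subdivideHomotopy 0 c = 0 := rfl

lemma subdivide_succ_nil (n : ℕ) :
    subdivide (n + 1) (single [] 1 : Chain R E) = single [] 1 := by
  simp [subdivide]

lemma subdivide_succ_single (n : ℕ) {l : List E} (hl : l ≠ []) :
    subdivide (n + 1) (single l 1 : Chain R E) =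
      cone (barycentre l) (subdivide n (simplexBoundary R l)) := by
  simp [subdivide, hl]

lemma subdivideHomotopy_succ_single (n : ℕ) (l : List E) :
    subdivideHomotopy (n + 1) (single l 1 : Chain R E) =
      cone (barycentre l) (single l 1 - subdivide (n + 1) (single l 1)
        - subdivideHomotopy n (simplexBoundary R l)) := by
  simp [subdivideHomotopy]

lemma boundary_subdivide (n : ℕ) (c : Chain R E) :
    boundary (subdivide (n + 1) c) = subdivide n (boundary c) := by
  induction n generalizing c with
  | zero =>
    refine hom_congr (F := boundary ∘ₗ subdivide 1) (F' := subdivide 0 ∘ₗ boundary) (fun l => ?_) c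
    rcases eq_or_ne l [] with rfl | hl
    · simp [simplexBoundary, subdivide]
    · simp [hl, boundary_cone, subdivide, boundary_simplexBoundary]
  | succ n ih =>
    refine hom_congr (F := boundary ∘ₗ subdivide (n + 1 + 1)) (F' := subdivide (n + 1) ∘ₗ boundary)
      (fun l => ?_) c
    rcases eq_or_ne l [] with rfl | hl
    · simp [subdivide_succ_nil, simplexBoundary]
    · simp [subdivide_succ_single, hl, boundary_cone, ih, boundary_simplexBoundary]

lemma boundary_subdivideHomotopy (n : ℕ) (c : Chain R E) :
    boundary (subdivideHomotopy (n + 1) c) =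
      c - subdivide (n + 1) c - subdivideHomotopy n (boundary c) := by
  induction n generalizing c with
  | zero =>
    refine hom_congr (F := boundary ∘ₗ subdivideHomotopy 1) (F' := LinearMap.id - subdivide 1 -
      subdivideHomotopy 0 ∘ₗ boundary) (fun l => ?_) c
    simp [subdivideHomotopy_succ_single, boundary_cone, boundary_subdivide, simplexBoundary]
  | succ n ih =>
    refine hom_congr (F := boundary ∘ₗ subdivideHomotopy (n + 1 + 1)) (F' := LinearMap.id -
      subdivide (n + 1 + 1) - subdivideHomotopy (n + 1) ∘ₗ boundary) (fun l => ?_) c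
    simp [subdivideHomotopy_succ_single, boundary_cone, boundary_subdivide, ih,
      boundary_simplexBoundary, simplexBoundary]
    abel

lemma barycentre_map (A : E →ₗ[ℝ] E') (l : List E) :
    barycentre (l.map A) = A (barycentre l) := by
  simp [barycentre, map_list_sum]

lemma subdivide_mapChain (A : E →ₗ[ℝ] E') (n : ℕ) (c : Chain R E) :
    subdivide n (mapChain A c) = mapChain A (subdivide n c) := by
  induction n generalizing c with
  | zero => simp [subdivide]
  | succ n ih =>
    refine hom_congr (F := subdivide (n + 1) ∘ₗ mapChain A) (F' := mapChain A ∘ₗ subdivide (n + 1))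
      (fun l => ?_) c
    rcases eq_or_ne l [] with rfl | hl
    · simp [subdivide_succ_nil]
    · simp [subdivide_succ_single, hl, simplexBoundary_map, ih, mapChain_cone, barycentre_map]

lemma subdivideHomotopy_mapChain (A : E →ₗ[ℝ] E') (n : ℕ) (c : Chain R E) :
    subdivideHomotopy n (mapChain A c) = mapChain A (subdivideHomotopy n c) := by
  induction n generalizing c with
  | zero => simp [subdivideHomotopy]
  | succ n ih =>
    refine hom_congr (F := subdivideHomotopy (n + 1) ∘ₗ mapChain A)
      (F' := mapChain A ∘ₗ subdivideHomotopy (n + 1)) (fun l => ?_) c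
    have hsubdivide := subdivide_mapChain (R := R) A (n + 1) (single l 1)
    rw [mapChain_single] at hsubdivide
    simp only [LinearMap.comp_apply, mapChain_single, subdivideHomotopy_succ_single,
      simplexBoundary_map, ih, mapChain_cone, barycentre_map, map_sub, hsubdivide]

lemma map_simplexBoundary_mem_hull {F : Chain R E →ₗ[R] Chain R E}
    (hF : ∀ l, F (single l 1) ∈ chainsOn R fun l' => ∀ x ∈ l', x ∈ hull l) (l : List E) :
    F (simplexBoundary R l) ∈ chainsOn R fun l' => ∀ x ∈ l', x ∈ hull l :=
  map_mem_of_mem_chainsOn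
    (fun l' hl' => chainsOn_mono (fun _ h x hx => hull_mono hl'.2 (h x hx)) (hF l'))
    (simplexBoundary_mem_chainsOn l)

lemma cone_barycentre_mem_hull {l : List E} (hl : l ≠ []) {c : Chain R E}
    (hc : c ∈ chainsOn R fun l' => ∀ x ∈ l', x ∈ hull l) :
    cone (barycentre l) c ∈ chainsOn R fun l' => ∀ x ∈ l', x ∈ hull l :=
  cone_mem_chainsOn (fun _ h => List.forall_mem_cons.2 ⟨barycentre_mem_hull hl, h⟩) hc

lemma subdivide_mem_hull (n : ℕ) (l : List E) :
    subdivide n (single l 1) ∈ chainsOn R fun l' => ∀ x ∈ l', x ∈ hull l := by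
  induction n generalizing l with
  | zero => exact single_mem_chainsOn fun x => subset_hull
  | succ n ih =>
    rcases eq_or_ne l [] with rfl | hl
    · rw [subdivide_succ_nil]
      exact single_mem_chainsOn (by simp)
    · rw [subdivide_succ_single n hl]
      exact cone_barycentre_mem_hull hl (map_simplexBoundary_mem_hull ih l)

lemma subdivideHomotopy_mem_hull (n : ℕ) (l : List E) :
    subdivideHomotopy n (single l 1) ∈ chainsOn R fun l' => ∀ x ∈ l', x ∈ hull l := by
  induction n generalizing l with
  | zero => exact Submodule.zero_mem _
  | succ n ih =>
    rcases eq_or_ne l [] with rfl | hl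
    · simp [subdivideHomotopy_succ_single, subdivide_succ_nil, simplexBoundary]
    · rw [subdivideHomotopy_succ_single]
      refine cone_barycentre_mem_hull hl ?_
      exact Submodule.sub_mem _ (Submodule.sub_mem _ (single_mem_chainsOn fun x => subset_hull)
        (subdivide_mem_hull _ _)) (map_simplexBoundary_mem_hull ih l)

end Subdivision

section Localisation

variable {R : Type*} [CommRing R] {E : Type*}

/-- Simplices with at most `n` vertices, inside `P` and with vertices at mutual distance at most
`c`. -/
structure IsSmallSimplex [SeminormedAddCommGroup E] [NormedSpace ℝ E] (n : ℕ) (P : Set E) (c : ℝ)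
    (l : List E) : Prop where
  length_le : l.length ≤ n
  hull_subset : hull l ⊆ P
  dist_le : ∀ x ∈ l, ∀ y ∈ l, dist x y ≤ c

lemma subdivide_mem_small [SeminormedAddCommGroup E] [NormedSpace ℝ E] {N : ℕ} {P : Set E} {c : ℝ}
    (hc0 : 0 ≤ c) (n : ℕ) (hn : n ≤ N) (l : List E) (hl : IsSmallSimplex n P c l) :
    subdivide n (single l 1) ∈ chainsOn R (IsSmallSimplex n (hull l) ((1 - (N : ℝ)⁻¹) * c)) := by
  induction n generalizing l with
  | zero =>
    obtain rfl := List.length_eq_zero_iff.1 (Nat.le_zero.1 hl.length_le)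
    exact single_mem_chainsOn ⟨le_rfl, subset_rfl, by simp⟩
  | succ n ih =>
    rcases eq_or_ne l [] with rfl | hne
    · rw [subdivide_succ_nil]
      exact single_mem_chainsOn ⟨by simp, subset_rfl, by simp⟩
    rw [subdivide_succ_single n hne]
    refine cone_mem_chainsOn (Q := IsSmallSimplex n (hull l) ((1 - (N : ℝ)⁻¹) * c)) ?_ ?_
    · intro l' hl'
      have hmem : ∀ x ∈ barycentre l :: l', x ∈ hull l := List.forall_mem_cons.2
        ⟨barycentre_mem_hull hne, fun x hx => hl'.hull_subset (subset_hull hx)⟩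
      have hdist : ∀ x ∈ barycentre l :: l', dist x (barycentre l) ≤ (1 - (N : ℝ)⁻¹) * c :=
        fun x hx => dist_barycentre_le (hl.length_le.trans hn) hc0 hl.dist_le (hmem x hx)
      refine ⟨by simpa using hl'.length_le, hull_subset_hull hmem, ?_⟩
      refine List.forall_mem_cons.2 ⟨fun y hy => dist_comm y _ ▸ hdist y hy, fun x hx => ?_⟩
      exact List.forall_mem_cons.2 ⟨hdist x (List.mem_cons_of_mem _ hx), hl'.dist_le x hx⟩
    · refine map_mem_of_mem_chainsOn (fun l' hl' => ?_) (simplexBoundary_mem_chainsOn l)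
      obtain ⟨hlength, hsub⟩ := hl'
      refine chainsOn_mono (fun l'' h => ?_) (ih (by lia) l' ⟨?_, (hull_mono hsub).trans
        hl.hull_subset, fun x hx y hy => hl.dist_le x (hsub hx) y (hsub hy)⟩)
      · exact ⟨h.length_le, h.hull_subset.trans (hull_mono hsub), h.dist_le⟩
      · have := hl.length_le
        lia

variable {Γ : Type*}

/-- Invariance, under a family of linear maps, of a cochain on the simplices contained in `P`. -/
def IsInvariantOn [AddCommGroup E] [Module ℝ E] (act : Γ → E →ₗ[ℝ] E) (P : Set E)
    (η : Chain R E →ₗ[R] R) : Prop :=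
  ∀ g l, hull l ⊆ P → η (single (l.map (act g)) 1) = η (single l 1)

/-- A chain is a cycle modulo an action if its boundary is annihilated by the invariant cochains,
that is, if its image in the chain complex of the quotient is a cycle. -/
def IsCycleMod [AddCommGroup E] [Module ℝ E] (act : Γ → E →ₗ[ℝ] E) (P : Set E)
    (z : Chain R E) : Prop :=
  ∀ η : Chain R E →ₗ[R] R, IsInvariantOn act P η → η (boundary z) = 0

section

variable [AddCommGroup E] [Module ℝ E] {act : Γ → E →ₗ[ℝ] E} {P : Set E}

lemma IsInvariantOn.comp {η : Chain R E →ₗ[R] R} (hη : IsInvariantOn act P η)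
    {F : Chain R E →ₗ[R] Chain R E} (hmap : ∀ g c, F (mapChain (act g) c) = mapChain (act g) (F c))
    (hhull : ∀ l, F (single l 1) ∈ chainsOn R fun l' => ∀ x ∈ l', x ∈ hull l) :
    IsInvariantOn act P (η ∘ₗ F) := by
  intro g l hl
  rw [LinearMap.comp_apply, LinearMap.comp_apply, ← mapChain_single, hmap]
  refine eqOn_chainsOn (F := η ∘ₗ mapChain (act g)) (F' := η) (fun l' hl' => ?_) (hhull l)
  rw [LinearMap.comp_apply, mapChain_single]
  exact hη g l' ((hull_subset_hull hl').trans hl)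

lemma IsCycleMod.subdivide {z : Chain R E} (hz : IsCycleMod act P z) (n : ℕ) :
    IsCycleMod act P (subdivide (n + 1) z) := by
  intro η hη
  rw [boundary_subdivide]
  exact hz _ (hη.comp (fun g => subdivide_mapChain (act g) n) (subdivide_mem_hull n))

lemma IsCycleMod.apply_subdivide {z : Chain R E} (hz : IsCycleMod act P z)
    {ω : Chain R E →ₗ[R] R} (hω : IsInvariantOn act P ω) (hcocycle : ∀ c, ω (boundary c) = 0)
    (n : ℕ) : ω (TransversalTverberg.subdivide (n + 1) z) = ω z := by
  have hhomotopy : ω (subdivideHomotopy n (boundary z)) = 0 :=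
    hz (ω ∘ₗ subdivideHomotopy n)
      (hω.comp (fun g => subdivideHomotopy_mapChain (act g) n) (subdivideHomotopy_mem_hull n))
  have := congrArg ω (boundary_subdivideHomotopy n z)
  rw [hcocycle, map_sub, map_sub, hhomotopy, sub_zero] at this
  exact (sub_eq_zero.1 this.symm).symm

end

variable [SeminormedAddCommGroup E] [NormedSpace ℝ E] {act : Γ → E →ₗ[ℝ] E} {P : Set E}

lemma IsCycleMod.exists_mem_small {n : ℕ} {z : Chain R E} (hz : IsCycleMod act P z) {c : ℝ}
    (hc0 : 0 ≤ c) (hsmall : z ∈ chainsOn R (IsSmallSimplex (n + 1) P c))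
    {ω : Chain R E →ₗ[R] R} (hω : IsInvariantOn act P ω) (hcocycle : ∀ c, ω (boundary c) = 0)
    (k : ℕ) :
    ∃ z' ∈ chainsOn R (IsSmallSimplex (n + 1) P ((1 - ((n + 1 : ℕ) : ℝ)⁻¹) ^ k * c)),
      IsCycleMod act P z' ∧ ω z' = ω z := by
  have hρ : 0 ≤ 1 - ((n + 1 : ℕ) : ℝ)⁻¹ := sub_nonneg.2 (Nat.cast_inv_le_one _)
  induction k with
  | zero => exact ⟨z, by simpa using hsmall, hz, rfl⟩
  | succ k ih =>
    obtain ⟨z', hsmall', hz', hval⟩ := ih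
    refine ⟨TransversalTverberg.subdivide (n + 1) z', ?_, hz'.subdivide n,
      (hz'.apply_subdivide hω hcocycle n).trans hval⟩
    refine map_mem_of_mem_chainsOn (fun l hl => ?_) hsmall'
    refine chainsOn_mono (fun l' hl' => ⟨hl'.length_le, hl'.hull_subset.trans hl.hull_subset, ?_⟩)
      (subdivide_mem_small (by positivity) (n + 1) le_rfl l hl)
    rw [pow_succ', mul_assoc]
    exact hl'.dist_le

theorem IsCycleMod.exists_small_simplex {n : ℕ} {z : Chain R E} (hz : IsCycleMod act P z)
    (hP : Bornology.IsBounded P) (hzP : z ∈ chainsOn R fun l => l.length ≤ n + 1 ∧ hull l ⊆ P)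
    {ω : Chain R E →ₗ[R] R} (hω : IsInvariantOn act P ω) (hcocycle : ∀ c, ω (boundary c) = 0)
    (hne : ω z ≠ 0) {δ : ℝ} (hδ : 0 < δ) :
    ∃ l : List E, ω (single l 1) ≠ 0 ∧ (∀ x ∈ l, x ∈ P) ∧ ∀ x ∈ l, ∀ y ∈ l, dist x y < δ := by
  obtain ⟨C, hC⟩ := Metric.isBounded_iff.1 hP
  have hsmall : z ∈ chainsOn R (IsSmallSimplex (n + 1) P (max C 0)) :=
    chainsOn_mono (fun l hl => ⟨hl.1, hl.2, fun x hx y hy => le_max_of_le_left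
      (hC (hl.2 (subset_hull hx)) (hl.2 (subset_hull hy)))⟩) hzP
  obtain ⟨k, hk⟩ : ∃ k : ℕ, (1 - ((n + 1 : ℕ) : ℝ)⁻¹) ^ k * max C 0 < δ := by
    have htendsto := (tendsto_pow_atTop_nhds_zero_of_lt_one
      (sub_nonneg.2 (Nat.cast_inv_le_one (n + 1))) (sub_lt_self 1 (by positivity))).mul_const
        (max C 0)
    rw [zero_mul] at htendsto
    exact (htendsto.eventually_lt_const hδ).exists
  obtain ⟨z', hsmall', -, hval⟩ :=
    hz.exists_mem_small (le_max_right C 0) hsmall hω hcocycle k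
  by_contra! hzero
  refine hne (hval.symm.trans (eqOn_chainsOn (F' := 0) (fun l hl => ?_) hsmall'))
  by_contra hl0
  obtain ⟨x, hx, y, hy, hxy⟩ := hzero l hl0 fun x hx => hl.hull_subset (subset_hull hx)
  exact (hxy.trans (hl.dist_le x hx y hy)).not_gt hk

end Localisation

/-! ### A chain that is a cycle modulo an elementary abelian group -/

section PathChain

open Finsupp (single)

lemma sum_sum_eq_sum_diag {ι M : Type*} [Fintype ι] [AddCommGroup M] (F : ι → ι → M)
    (hF : ∀ i k, i ≠ k → F i k = -F k i) : ∑ i, ∑ k, F i k = ∑ i, F i i := by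
  classical
  have hoffDiag : ∑ x ∈ Finset.univ.offDiag, F x.1 x.2 = 0 := by
    refine Finset.sum_involution (fun x _ => x.swap) ?_ ?_ ?_ ?_
    · rintro ⟨i, k⟩ h
      rw [hF i k (by simpa using h)]
      exact neg_add_cancel _
    · rintro ⟨i, k⟩ h - heq
      simp only [Finset.mem_offDiag, Finset.mem_univ, true_and] at h
      exact h (Prod.mk.inj heq).2
    · rintro ⟨i, k⟩ h
      simpa [eq_comm] using h
    · exact fun _ _ => rfl
  rw [← Finset.sum_product', ← Finset.diag_union_offDiag,
    Finset.sum_union (Finset.disjoint_diag_offDiag _), Finset.sum_diag, hoffDiag, add_zero]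

lemma sum_sum_smul_add_eq_zero {G R M : Type*} [AddGroup G] [Fintype G] [Ring R] [AddCommGroup M]
    [Module R M] {c : G → R} (hc : ∑ a, c a = 0) (F : G → M) :
    ∑ a, ∑ b, c a • F (a + b) = 0 := by
  have htranslate (a : G) : ∑ b, c a • F (a + b) = c a • ∑ b, F b := by
    rw [← Finset.smul_sum]
    congr 1
    exact Equiv.sum_comp (Equiv.addLeft a) F
  simp only [htranslate, ← Finset.sum_smul, hc, zero_smul]

lemma sum_sub_single_of_mem {ι : Type*} {D : ι →₀ ℕ} {i : ι} (h : D i ≠ 0) {s : Finset ι}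
    (hi : i ∈ s) :
    ∑ k ∈ s, (D - single i 1 : ι →₀ ℕ) k + 1 = ∑ k ∈ s, D k := by
  classical
  have hle : single i 1 ≤ D := Finsupp.single_le_iff.2 (Nat.one_le_iff_ne_zero.2 h)
  conv_rhs => rw [← tsub_add_cancel_of_le hle]
  simp only [Finsupp.add_apply, Finset.sum_add_distrib, Finsupp.single_apply, Finset.sum_ite_eq, hi,
    if_true]

lemma sum_sub_single_of_notMem {ι : Type*} (D : ι →₀ ℕ) {i : ι} {s : Finset ι} (hi : i ∉ s) :
    ∑ k ∈ s, (D - single i 1 : ι →₀ ℕ) k = ∑ k ∈ s, D k :=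
  Finset.sum_congr rfl fun k hk => by simp [Finsupp.single_eq_of_ne fun h : k = i => hi (h ▸ hk)]

section ShuffleSign

variable {ι : Type*} [Fintype ι] (ord : ι ↪ ℕ) (R : Type*) [CommRing R]

/-- The sign of the shuffle that moves a step in direction `i` in front of all steps in smaller
directions, if `D` counts the remaining steps; zero if no step in direction `i` remains. -/
def shuffleSign (D : ι →₀ ℕ) (i : ι) : R :=
  if D i = 0 then 0 else (-1) ^ ∑ k with ord k < ord i, D k

variable {ord R}

lemma shuffleSign_of_eq_zero {D : ι →₀ ℕ} {i : ι} (h : D i = 0) : shuffleSign ord R D i = 0 :=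
  if_pos h

lemma shuffleSign_mul_self {D : ι →₀ ℕ} {i : ι} (h : 2 ≤ D i) :
    shuffleSign ord R D i * shuffleSign ord R (D - single i 1) i = 1 := by
  have hi : (D - single i 1 : ι →₀ ℕ) i ≠ 0 := by
    rw [Finsupp.tsub_apply, Finsupp.single_eq_same]
    lia
  rw [shuffleSign, shuffleSign, if_neg (by lia), if_neg hi,
    sum_sub_single_of_notMem D (by simp), ← pow_add, Even.neg_one_pow ⟨_, rfl⟩]

lemma shuffleSign_mul_of_lt (D : ι →₀ ℕ) {i k : ι} (hik : ord i < ord k) :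
    shuffleSign ord R D i * shuffleSign ord R (D - single i 1) k =
      -(shuffleSign ord R D k * shuffleSign ord R (D - single k 1) i) := by
  have hne : i ≠ k := fun h => hik.ne (congrArg ord h)
  by_cases hi : D i = 0
  · simp [shuffleSign, hi]
  by_cases hk : D k = 0
  · simp [shuffleSign, hk]
  have hki : (D - single i 1 : ι →₀ ℕ) k = D k := by simp [Finsupp.single_eq_of_ne hne.symm]
  have hik' : (D - single k 1 : ι →₀ ℕ) i = D i := by simp [Finsupp.single_eq_of_ne hne]
  simp only [shuffleSign, hki, hik', hi, hk, if_false]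
  rw [sum_sub_single_of_notMem D (i := k) (by simpa using hik.le),
    ← sum_sub_single_of_mem hi (s := {l | ord l < ord k}) (by simpa using hik), pow_succ]
  ring

lemma shuffleSign_antisymm (D : ι →₀ ℕ) {i k : ι} (hne : i ≠ k) :
    shuffleSign ord R D i * shuffleSign ord R (D - single i 1) k =
      -(shuffleSign ord R D k * shuffleSign ord R (D - single k 1) i) := by
  rcases (ord.injective.ne hne).lt_or_gt with h | h
  · exact shuffleSign_mul_of_lt D h
  · rw [shuffleSign_mul_of_lt D h, neg_neg]

end ShuffleSign

section ResolutionCoeff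

variable {p : ℕ}

/-- The coefficients of the differentials of the periodic resolution of `ZMod p`: `1 - T⁻¹` in even
degrees and the norm element in odd degrees. -/
def resolutionCoeff (m : ℕ) (a : ZMod p) : ZMod p :=
  if Even m then (if a = 0 then 1 else 0) - (if a = -1 then 1 else 0) else 1

variable [NeZero p]

lemma sum_resolutionCoeff (m : ℕ) : ∑ a : ZMod p, resolutionCoeff m a = 0 := by
  unfold resolutionCoeff
  split_ifs <;> simp

lemma sum_resolutionCoeff_mul_smul {m : ℕ} (hm : m ≠ 0) {M : Type*} [AddCommGroup M]
    [Module (ZMod p) M] (F : ZMod p → M) :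
    ∑ a : ZMod p, ∑ b : ZMod p, (resolutionCoeff m a * resolutionCoeff (m - 1) b) • F (a + b) =
      0 := by
  by_cases h : Even m
  · have hodd (b : ZMod p) : resolutionCoeff (m - 1) b = 1 :=
      if_neg (by simp [Nat.even_sub' (Nat.one_le_iff_ne_zero.2 hm), h])
    simp only [hodd, mul_one]
    exact sum_sum_smul_add_eq_zero (sum_resolutionCoeff m) F
  · have hodd (a : ZMod p) : resolutionCoeff m a = 1 := if_neg h
    rw [Finset.sum_comm]
    simp only [hodd, one_mul, add_comm (_ : ZMod p)]
    exact sum_sum_smul_add_eq_zero (sum_resolutionCoeff (m - 1)) F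

end ResolutionCoeff

variable {p : ℕ} [NeZero p] {ι : Type*} [Fintype ι] [DecidableEq ι] {E E' : Type*}
  (ord : ι ↪ ℕ) (V : (ι →₀ ℕ) × (ι → ZMod p) → E)

/-- The signed sum of the simplices along all lattice paths with `n` steps that start at the vertex
`V (D, g)` and descend from `D`. A step in direction `i` adds an element `a` to the `i`-th
coordinate of `g`, with coefficient `resolutionCoeff (D i) a`. If `n` is the sum of the entries of
`D`, this is the generator of multidegree `D` of the tensor product of periodic resolutions, mapped
to the chains of `E` by means of shuffles. -/
def pathChain : ℕ → (ι →₀ ℕ) → (ι → ZMod p) → Chain (ZMod p) E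
  | 0, D, g => cone (V (D, g)) (single [] 1)
  | n + 1, D, g => cone (V (D, g)) (∑ i, ∑ a : ZMod p,
      (shuffleSign ord (ZMod p) D i * resolutionCoeff (D i) a) •
        pathChain n (D - single i 1) (g + Pi.single i a))

/-- The face of `pathChain` opposite to the initial vertex. -/
def pathFace (n : ℕ) (D : ι →₀ ℕ) (g : ι → ZMod p) : Chain (ZMod p) E :=
  ∑ i, ∑ a : ZMod p, (shuffleSign ord (ZMod p) D i * resolutionCoeff (D i) a) •
    pathChain ord V n (D - single i 1) (g + Pi.single i a)

lemma pathChain_zero (D : ι →₀ ℕ) (g : ι → ZMod p) :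
    pathChain ord V 0 D g = single [V (D, g)] 1 :=
  cone_single _ _ _

lemma pathChain_succ (n : ℕ) (D : ι →₀ ℕ) (g : ι → ZMod p) :
    pathChain ord V (n + 1) D g = cone (V (D, g)) (pathFace ord V n D g) := rfl

lemma pathFace_succ (n : ℕ) (D : ι →₀ ℕ) (g : ι → ZMod p) :
    ∑ i, ∑ a : ZMod p, (shuffleSign ord (ZMod p) D i * resolutionCoeff (D i) a) •
        pathFace ord V n (D - single i 1) (g + Pi.single i a) =
      ∑ i, ∑ k, (shuffleSign ord (ZMod p) D i * shuffleSign ord (ZMod p) (D - single i 1) k) •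
        ∑ a : ZMod p, ∑ b : ZMod p,
          (resolutionCoeff (D i) a * resolutionCoeff ((D - single i 1 : ι →₀ ℕ) k) b) •
            pathChain ord V n (D - single i 1 - single k 1)
              (g + Pi.single i a + Pi.single k b) := by
  refine Finset.sum_congr rfl fun i _ => ?_
  simp only [pathFace, Finset.smul_sum]
  rw [Finset.sum_comm]
  simp only [smul_smul, mul_mul_mul_comm]

/-- Two consecutive steps in different directions cancel by the antisymmetry of the shuffle signs,
and two steps in the same direction because the resolution is a complex. -/
lemma sum_smul_pathFace_eq_zero (n : ℕ) (D : ι →₀ ℕ) (g : ι → ZMod p) :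
    ∑ i, ∑ a : ZMod p, (shuffleSign ord (ZMod p) D i * resolutionCoeff (D i) a) •
      pathFace ord V n (D - single i 1) (g + Pi.single i a) = 0 := by
  rw [pathFace_succ, sum_sum_eq_sum_diag]
  · refine Finset.sum_eq_zero fun i _ => ?_
    by_cases hi : D i = 0
    · rw [shuffleSign_of_eq_zero hi, zero_mul, zero_smul]
    · simp only [Finsupp.tsub_apply, Finsupp.single_eq_same, add_assoc, ← Pi.single_add]
      rw [sum_resolutionCoeff_mul_smul hi
        (fun a : ZMod p => pathChain ord V n (D - single i 1 - single i 1)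
          (g + (Pi.single i a : ι → ZMod p))), smul_zero]
  · intro i k hik
    rw [shuffleSign_antisymm D hik, neg_smul, Finset.sum_comm]
    simp only [Finsupp.tsub_apply, Finsupp.single_eq_of_ne hik, Finsupp.single_eq_of_ne hik.symm,
      tsub_zero, tsub_right_comm, add_right_comm, mul_comm]

lemma boundary_pathFace (n : ℕ) (D : ι →₀ ℕ) (g : ι → ZMod p) (hD : ∑ i, D i = n + 1) :
    boundary (pathFace ord V n D g) = 0 := by
  induction n generalizing D g with
  | zero =>
    simp only [pathFace, map_sum, map_smul, pathChain_zero, boundary_single, simplexBoundary,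
      map_zero, sub_zero, mul_smul, ← Finset.smul_sum, ← Finset.sum_smul, sum_resolutionCoeff,
      zero_smul, smul_zero, Finset.sum_const_zero]
  | succ n ih =>
    rw [← sum_smul_pathFace_eq_zero ord V n D g]
    simp only [pathFace.eq_def ord V (n + 1), map_sum, map_smul]
    refine Finset.sum_congr rfl fun i _ => Finset.sum_congr rfl fun a _ => ?_
    by_cases hi : D i = 0
    · simp only [shuffleSign_of_eq_zero hi, zero_mul, zero_smul]
    · have hsum := sum_sub_single_of_mem hi (Finset.mem_univ i)
      rw [pathChain_succ, boundary_cone, ih _ _ (by lia), map_zero, sub_zero]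

lemma boundary_pathChain_succ (n : ℕ) (D : ι →₀ ℕ) (g : ι → ZMod p) (hD : ∑ i, D i = n + 1) :
    boundary (pathChain ord V (n + 1) D g) = pathFace ord V n D g := by
  rw [pathChain_succ, boundary_cone, boundary_pathFace ord V n D g hD, map_zero, sub_zero]

lemma mapChain_pathChain {V' : (ι →₀ ℕ) × (ι → ZMod p) → E'} {f : E → E'} {h : ι → ZMod p}
    (hf : ∀ D g, f (V (D, g)) = V' (D, g + h)) (n : ℕ) (D : ι →₀ ℕ) (g : ι → ZMod p) :
    mapChain f (pathChain ord V n D g) = pathChain ord V' n D (g + h) := by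
  induction n generalizing D g with
  | zero => simp [pathChain, hf]
  | succ n ih =>
    simp only [pathChain, mapChain_cone, hf, map_sum, map_smul, ih, add_right_comm]

/-- One step of the lattice paths in `pathChain`. -/
def IsPathStep (x y : (ι →₀ ℕ) × (ι → ZMod p)) : Prop :=
  ∃ i a, x.1 i ≠ 0 ∧ y = (x.1 - single i 1, x.2 + Pi.single i a)

lemma pathChain_mem_chainsOn (n : ℕ) (D : ι →₀ ℕ) (g : ι → ZMod p) :
    pathChain ord V n D g ∈ chainsOn (ZMod p) fun l =>
      ∃ t, t.length = n ∧ ((D, g) :: t).IsChain IsPathStep ∧ l = ((D, g) :: t).map V := by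
  induction n generalizing D g with
  | zero =>
    rw [pathChain_zero]
    exact single_mem_chainsOn ⟨[], rfl, List.isChain_singleton _, rfl⟩
  | succ n ih =>
    rw [pathChain_succ]
    refine cone_mem_chainsOn (Q := fun l => ∃ t, t.length = n + 1 ∧
      ((D, g) :: t).IsChain IsPathStep ∧ l = t.map V) ?_ ?_
    · rintro _ ⟨t, hlength, ht, rfl⟩
      exact ⟨t, hlength, ht, rfl⟩
    · refine Submodule.sum_mem _ fun i _ => Submodule.sum_mem _ fun a _ => ?_
      by_cases hi : D i = 0
      · rw [shuffleSign_of_eq_zero hi, zero_mul, zero_smul]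
        exact Submodule.zero_mem _
      · refine Submodule.smul_mem _ _ (chainsOn_mono ?_ (ih (D - single i 1) (g + Pi.single i a)))
        rintro _ ⟨t, hlength, ht, rfl⟩
        exact ⟨_ :: t, by simp [hlength], ht.cons_cons ⟨i, a, hi, rfl⟩, rfl⟩

end PathChain

/-! ### Cup products of labellings -/

section Cochain

variable {R E : Type*} [CommRing R]

/-- The linear functional on chains that takes the values of the cochain `ω` on the simplices. -/
abbrev evalCochain (ω : List E → R) : Chain R E →ₗ[R] R := Finsupp.linearCombination R ω

/-- The cochains that vanish on boundaries. -/
def IsCocycle (ω : List E → R) : Prop := ∀ l, evalCochain ω (simplexBoundary R l) = 0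

lemma IsCocycle.evalCochain_boundary {ω : List E → R} (hω : IsCocycle ω) (c : Chain R E) :
    evalCochain ω (boundary c) = 0 :=
  hom_congr (F := evalCochain ω ∘ₗ boundary) (F' := 0) (fun l => by simpa using hω l) c

lemma evalCochain_mapChain {E' : Type*} (f : E → E') (ω : List E' → R) (c : Chain R E) :
    evalCochain ω (mapChain f c) = evalCochain (fun l => ω (l.map f)) c :=
  hom_congr (F := evalCochain ω ∘ₗ mapChain f) (fun l => by simp) c

/-- The unit for the cup product: the `0`-cochain with value `1` on every point. -/
def unitCochain (l : List E) : R := if l.length = 1 then 1 else 0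

lemma isCocycle_unitCochain : IsCocycle (unitCochain : List E → R)
  | [] => by simp [simplexBoundary]
  | [x] => by simp [simplexBoundary, unitCochain]
  | [x, y] => by simp [simplexBoundary, unitCochain]
  | x :: y :: z :: r => by
    refine map_mem_of_mem_chainsOn (S := ⊥) (fun l hl => ?_) (simplexBoundary_mem_chainsOn _)
    have : l.length ≠ 1 := by have := hl.1; simp at this; omega
    simp [unitCochain, this]

/-- The cup product of the `1`-cochain `f` with `ω`. -/
def cupOne (f : E → E → R) (ω : List E → R) : List E → R
  | x :: y :: r => f x y * ω (y :: r)
  | _ => 0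

/-- The cup product of the `2`-cochain `f` with `ω`. -/
def cupTwo (f : E → E → E → R) (ω : List E → R) : List E → R
  | x :: y :: z :: r => f x y z * ω (z :: r)
  | _ => 0

lemma evalCochain_cupOne (f : E → E → R) (ω : List E → R) (x y : E) (c : Chain R E) :
    evalCochain (cupOne f ω) (cone x (cone y c)) = f x y * evalCochain ω (cone y c) :=
  hom_congr (F := evalCochain (cupOne f ω) ∘ₗ cone x ∘ₗ cone y)
    (F' := f x y • (evalCochain ω ∘ₗ cone y)) (fun l => by simp [cupOne]) c

lemma evalCochain_cupTwo (f : E → E → E → R) (ω : List E → R) (x y z : E) (c : Chain R E) :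
    evalCochain (cupTwo f ω) (cone x (cone y (cone z c))) =
      f x y z * evalCochain ω (cone z c) :=
  hom_congr (F := evalCochain (cupTwo f ω) ∘ₗ cone x ∘ₗ cone y ∘ₗ cone z)
    (F' := f x y z • (evalCochain ω ∘ₗ cone z)) (fun l => by simp [cupTwo]) c

lemma IsCocycle.cupOne {f : E → E → R} {ω : List E → R}
    (hf : ∀ x y z, f y z - f x z + f x y = 0) (hω : IsCocycle ω) : IsCocycle (cupOne f ω)
  | [] => by simp [simplexBoundary]
  | [x] => by simp [simplexBoundary, TransversalTverberg.cupOne]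
  | [x, y] => by simp [simplexBoundary, TransversalTverberg.cupOne]
  | x :: y :: z :: r => by
    have hωyz := hω (y :: z :: r)
    rw [simplexBoundary, map_sub, sub_eq_zero] at hωyz
    rw [simplexBoundary, simplexBoundary]
    simp only [map_sub, evalCochain_cupOne, ← hωyz, cone_single, Finsupp.linearCombination_single,
      one_smul, TransversalTverberg.cupOne]
    linear_combination ω (z :: r) * hf x y z

lemma IsCocycle.cupTwo {f : E → E → E → R} {ω : List E → R}
    (hf : ∀ x y z w, f y z w - f x z w + f x y w - f x y z = 0) (hω : IsCocycle ω) :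
    IsCocycle (cupTwo f ω)
  | [] => by simp [simplexBoundary]
  | [x] => by simp [simplexBoundary, TransversalTverberg.cupTwo]
  | [x, y] => by simp [simplexBoundary, TransversalTverberg.cupTwo]
  | [x, y, z] => by simp [simplexBoundary, TransversalTverberg.cupTwo]
  | x :: y :: z :: w :: r => by
    have hωzw := hω (z :: w :: r)
    rw [simplexBoundary, map_sub, sub_eq_zero] at hωzw
    rw [simplexBoundary, simplexBoundary, simplexBoundary]
    simp only [map_sub, evalCochain_cupTwo, ← hωzw, cone_single, Finsupp.linearCombination_single,
      one_smul, TransversalTverberg.cupTwo]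
    linear_combination ω (w :: r) * hf x y z w

lemma exists_of_cupOne_ne_zero {f : E → E → R} {ω : List E → R} :
    ∀ {l : List E}, cupOne f ω l ≠ 0 →
      (∃ x ∈ l, ∃ y ∈ l, f x y ≠ 0) ∧ ∃ r ⊆ l, ω r ≠ 0
  | [], h | [_], h => by simp [cupOne] at h
  | x :: y :: r, h => ⟨⟨x, by simp, y, by simp, left_ne_zero_of_mul h⟩,
      y :: r, by simp, right_ne_zero_of_mul h⟩

lemma exists_of_cupTwo_ne_zero {f : E → E → E → R} {ω : List E → R} :
    ∀ {l : List E}, cupTwo f ω l ≠ 0 →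
      (∃ x ∈ l, ∃ y ∈ l, ∃ z ∈ l, f x y z ≠ 0) ∧ ∃ r ⊆ l, ω r ≠ 0
  | [], h | [_], h | [_, _], h => by simp [cupTwo] at h
  | x :: y :: z :: r, h =>
    ⟨⟨x, by simp, y, by simp, z, by simp, left_ne_zero_of_mul h⟩,
      z :: r, fun _ h => List.mem_cons_of_mem _ (List.mem_cons_of_mem _ h),
      right_ne_zero_of_mul h⟩

lemma cupOne_map {E' : Type*} {A : E → E'} {f : E → E → R} {f' : E' → E' → R} {ω : List E → R}
    {ω' : List E' → R} :
    ∀ {l : List E}, (∀ x ∈ l, ∀ y ∈ l, f' (A x) (A y) = f x y) →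
      (∀ r ⊆ l, ω' (r.map A) = ω r) → cupOne f' ω' (l.map A) = cupOne f ω l
  | [], _, _ | [_], _, _ => by simp [cupOne]
  | x :: y :: r, hf, hω => congrArg₂ (· * ·) (hf x (by simp) y (by simp)) (hω (y :: r) (by simp))

lemma cupTwo_map {E' : Type*} {A : E → E'} {f : E → E → E → R} {f' : E' → E' → E' → R}
    {ω : List E → R} {ω' : List E' → R} :
    ∀ {l : List E}, (∀ x ∈ l, ∀ y ∈ l, ∀ z ∈ l, f' (A x) (A y) (A z) = f x y z) →
      (∀ r ⊆ l, ω' (r.map A) = ω r) → cupTwo f' ω' (l.map A) = cupTwo f ω l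
  | [], _, _ | [_], _, _ | [_, _], _, _ => by simp [cupTwo]
  | x :: y :: z :: r, hf, hω =>
    congrArg₂ (· * ·) (hf x (by simp) y (by simp) z (by simp))
      (hω (z :: r) fun _ h => List.mem_cons_of_mem _ (List.mem_cons_of_mem _ h))

end Cochain

section Carry

variable {p : ℕ}

/-- The carry cocycle of the extension of `ZMod p` by `ℤ`, with respect to the lift of residues of
least absolute value; its class generates `H²(ZMod p; ℤ)`. -/
def carry (u v : ZMod p) : ℤ := (u.valMinAbs + v.valMinAbs - (u + v).valMinAbs) / p

lemma mul_carry (u v : ZMod p) :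
    (p : ℤ) * carry u v = u.valMinAbs + v.valMinAbs - (u + v).valMinAbs := by
  refine Int.mul_ediv_cancel' ?_
  rw [← ZMod.intCast_zmod_eq_zero_iff_dvd]
  simp

lemma valMinAbs_one (hp : 2 < p) : (1 : ZMod p).valMinAbs = 1 := by
  have := ZMod.valMinAbs_natCast_of_le_half (n := p) (a := 1) (by omega)
  simpa using this

lemma valMinAbs_neg_one (hp : 2 < p) : (-1 : ZMod p).valMinAbs = -1 := by
  have hval : 2 * (1 : ZMod p).val ≠ p := by
    rw [ZMod.val_one_eq_one_mod, Nat.mod_eq_of_lt (by omega)]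
    omega
  rw [ZMod.valMinAbs_neg_of_ne_half hval, valMinAbs_one hp]

lemma carry_sub_eq_zero (hp : 2 < p) {a x y z : ZMod p} (hx : x = a ∨ x = a + 1)
    (hy : y = a ∨ y = a + 1) (hz : z = a ∨ z = a + 1) : carry (y - x) (z - y) = 0 := by
  refine (mul_right_inj' (by lia : (p : ℤ) ≠ 0)).1 ?_
  rw [mul_carry]
  rcases hx with rfl | rfl <;> rcases hy with rfl | rfl <;> rcases hz with rfl | rfl <;>
    simp [valMinAbs_one hp, valMinAbs_neg_one hp]

lemma carry_cocycle [NeZero p] (u v w : ZMod p) :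
    carry v w - carry (u + v) w + carry u (v + w) - carry u v = 0 := by
  refine (mul_right_inj' (NeZero.ne (p : ℤ))).1 ?_
  have h := mul_carry u (v + w)
  rw [← add_assoc] at h
  linear_combination mul_carry v w - mul_carry (u + v) w + h - mul_carry u v

end Carry

section LabelProduct

variable {p : ℕ} {E J : Type*}

/-- The cup product of the coboundaries of the labellings `s j`, `j ∈ js`. -/
def coboundaryProduct (s : J → E → ZMod p) (js : List J) : List E → ZMod p :=
  js.foldr (fun j => cupOne fun x y => s j y - s j x) unitCochain

/-- The cup product of the carry classes of the labellings `s j`, `j ∈ js`. -/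
def carryProduct (s : J → E → ZMod p) (js : List J) : List E → ZMod p :=
  js.foldr (fun j => cupTwo fun x y z => (carry (s j y - s j x) (s j z - s j y) : ZMod p))
    unitCochain

lemma isCocycle_coboundaryProduct (s : J → E → ZMod p) (js : List J) :
    IsCocycle (coboundaryProduct s js) := by
  induction js with
  | nil => exact isCocycle_unitCochain
  | cons j js ih => exact ih.cupOne fun x y z => by ring

lemma isCocycle_carryProduct [NeZero p] (s : J → E → ZMod p) (js : List J) :
    IsCocycle (carryProduct s js) := by
  induction js with
  | nil => exact isCocycle_unitCochain
  | cons j js ih =>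
    refine ih.cupTwo fun x y z w => ?_
    have h := carry_cocycle (s j y - s j x) (s j z - s j y) (s j w - s j z)
    rw [sub_add_sub_cancel', sub_add_sub_cancel'] at h
    exact_mod_cast congrArg (Int.cast : ℤ → ZMod p) h

lemma coboundaryProduct_eq_zero {s : J → E → ZMod p} {js : List J} {l : List E} {j : J}
    (hj : j ∈ js) {a : ZMod p} (hl : ∀ x ∈ l, s j x = a) : coboundaryProduct s js l = 0 := by
  induction js generalizing l with
  | nil => simp at hj
  | cons i js ih =>
    by_contra hne
    obtain ⟨⟨x, hx, y, hy, hxy⟩, r, hr, hne⟩ := exists_of_cupOne_ne_zero hne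
    rcases List.mem_cons.1 hj with rfl | hj
    · exact hxy (by rw [hl x hx, hl y hy, sub_self])
    · exact hne (ih hj fun x hx => hl x (hr hx))

lemma carryProduct_eq_zero (hp : 2 < p) {s : J → E → ZMod p} {js : List J} {l : List E}
    {j : J} (hj : j ∈ js) {a : ZMod p} (hl : ∀ x ∈ l, s j x = a ∨ s j x = a + 1) :
    carryProduct s js l = 0 := by
  induction js generalizing l with
  | nil => simp at hj
  | cons i js ih =>
    by_contra hne
    obtain ⟨⟨x, hx, y, hy, z, hz, hxyz⟩, r, hr, hne⟩ := exists_of_cupTwo_ne_zero hne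
    rcases List.mem_cons.1 hj with rfl | hj
    · exact hxyz (by rw [carry_sub_eq_zero hp (hl x hx) (hl y hy) (hl z hz), Int.cast_zero])
    · exact hne (ih hj fun x hx => hl x (hr hx))

variable {E' : Type*} {A : E → E'} {s : J → E → ZMod p} {s' : J → E' → ZMod p} {t : J → ZMod p}

lemma coboundaryProduct_map {js : List J} {l : List E}
    (h : ∀ j, ∀ x ∈ l, s' j (A x) = s j x + t j) :
    coboundaryProduct s' js (l.map A) = coboundaryProduct s js l := by
  induction js generalizing l with
  | nil => simp [coboundaryProduct, unitCochain]
  | cons j js ih =>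
    refine cupOne_map (fun x hx y hy => ?_) fun r hr => ih fun j x hx => h j x (hr hx)
    rw [h j x hx, h j y hy, add_sub_add_right_eq_sub]

lemma carryProduct_map {js : List J} {l : List E}
    (h : ∀ j, ∀ x ∈ l, s' j (A x) = s j x + t j) :
    carryProduct s' js (l.map A) = carryProduct s js l := by
  induction js generalizing l with
  | nil => simp [carryProduct, unitCochain]
  | cons j js ih =>
    refine cupTwo_map (fun x hx y hy z hz => ?_) fun r hr => ih fun j x hx => h j x (hr hx)
    simp only [h j x hx, h j y hy, h j z hz, add_sub_add_right_eq_sub]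

end LabelProduct

/-! ### Evaluation of the cup products on the path chain -/

section Carry

variable {p : ℕ} [NeZero p]

lemma sum_resolutionCoeff_mul_of_even {m : ℕ} (hm : Even m) (F : ZMod p → ZMod p) :
    ∑ a, resolutionCoeff m a * F a = F 0 - F (-1) := by
  simp [resolutionCoeff, hm, sub_mul]

lemma sum_carry_sub_sum_carry (u v x : ZMod p) :
    ∑ b : ZMod p, carry u (v + b * x) - ∑ b : ZMod p, carry (u - x) (v + b * x) =
      u.valMinAbs - (u - x).valMinAbs := by
  refine (mul_right_inj' (NeZero.ne (p : ℤ))).1 ?_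
  have hshift : ∑ b : ZMod p, (u - x + (v + b * x)).valMinAbs =
      ∑ b : ZMod p, (u + (v + b * x)).valMinAbs :=
    Fintype.sum_equiv (Equiv.subRight 1) _ _ fun b => by
      rw [Equiv.subRight_apply]
      ring_nf
  simp only [mul_sub, Finset.mul_sum, mul_carry, Finset.sum_sub_distrib, Finset.sum_add_distrib,
    Finset.sum_const, Finset.card_univ, ZMod.card, hshift, nsmul_eq_mul]
  ring

lemma sum_resolutionCoeff_mul_carry {m : ℕ} (hm : Even m) (hm0 : m ≠ 0) (u v x : ZMod p) :
    ∑ a : ZMod p, ∑ b : ZMod p, resolutionCoeff m a * resolutionCoeff (m - 1) b *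
      (carry (u + a * x) (v + b * x) : ZMod p) = x := by
  have hodd (b : ZMod p) : resolutionCoeff (m - 1) b = 1 :=
    if_neg (by simp [Nat.even_sub' (Nat.one_le_iff_ne_zero.2 hm0), hm])
  have hsum := congrArg (Int.cast : ℤ → ZMod p) (sum_carry_sub_sum_carry u v x)
  push_cast at hsum
  simp only [mul_assoc, ← Finset.mul_sum, sum_resolutionCoeff_mul_of_even hm, hodd, zero_mul,
    add_zero, one_mul, neg_one_mul, ← sub_eq_add_neg, hsum]
  simp

/-- The sum is a mixed second difference of `carry`; of the three terms of `carry` only the one that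
depends on `u + v` survives. -/
lemma sum_resolutionCoeff_mul_carry_comm {m n : ℕ} (hm : Even m) (hn : Even n)
    {u v u' v' : ZMod p} (h : u + v = u' + v') (x y : ZMod p) :
    ∑ a : ZMod p, ∑ b : ZMod p, resolutionCoeff m a * resolutionCoeff n b *
        (carry (u + a * x) (v + b * y) : ZMod p) =
      ∑ a : ZMod p, ∑ b : ZMod p, resolutionCoeff n a * resolutionCoeff m b *
        (carry (u' + a * y) (v' + b * x) : ZMod p) := by
  have hdiff : (carry u v - carry (u - x) v - carry u (v - y) + carry (u - x) (v - y) : ℤ) =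
      carry u' v' - carry (u' - y) v' - carry u' (v' - x) + carry (u' - y) (v' - x) := by
    refine (mul_right_inj' (NeZero.ne (p : ℤ))).1 ?_
    simp only [mul_add, mul_sub, mul_carry, sub_add_eq_add_sub, add_sub_assoc', h,
      sub_right_comm _ x y]
    ring
  have hdiff := congrArg (Int.cast : ℤ → ZMod p) hdiff
  push_cast at hdiff
  simp only [mul_assoc, ← Finset.mul_sum, sum_resolutionCoeff_mul_of_even hm,
    sum_resolutionCoeff_mul_of_even hn, zero_mul, add_zero, neg_one_mul, ← sub_eq_add_neg]
  linear_combination hdiff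

lemma sum_resolutionCoeff_mul_of_two (m : ℕ) (u v x : ZMod 2) :
    ∑ a : ZMod 2, resolutionCoeff m a * (u + a * x - v) = x := by
  unfold resolutionCoeff
  split_ifs <;> revert u v x <;> decide

end Carry

section LinearForm

open MvPolynomial

variable {R J ι : Type*} [CommRing R] [Fintype ι]

lemma coeff_toMvPolynomial_mul (χ : Matrix J ι R) (j : J) (P : MvPolynomial ι R) (D : ι →₀ ℕ) :
    coeff D (χ.toMvPolynomial j * P) =
      ∑ i, if D i = 0 then 0 else χ j i * coeff (D - single i 1) P := by
  simp only [Matrix.toMvPolynomial, Finset.sum_mul, coeff_sum, coeff_monomial_mul',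
    Finsupp.single_le_iff, Nat.one_le_iff_ne_zero, ite_not]

lemma coeff_prod_toMvPolynomial_ne_zero [Fintype J] [LinearOrder ι] [IsDomain R] {χ : Matrix J ι R}
    {lead : J → ι} (hlead : ∀ j, χ j (lead j) ≠ 0) (hlt : ∀ j, ∀ i < lead j, χ j i = 0) :
    coeff (∑ j, single (lead j) 1) (∏ j, χ.toMvPolynomial j) ≠ 0 := by
  have hcoeff (j : J) (i : ι) : coeff (single i 1) (χ.toMvPolynomial j) = χ j i := by
    simp [Matrix.toMvPolynomial, coeff_sum, coeff_monomial, Finsupp.single_left_inj]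
  have hdegree (j : J) :
      MonomialOrder.lex.degree (χ.toMvPolynomial j) = single (lead j) 1 := by
    refine MonomialOrder.lex.toSyn.injective (le_antisymm ?_ ?_)
    · refine MonomialOrder.lex.degree_le_iff.2 fun D hD => ?_
      obtain ⟨i, rfl⟩ : ∃ i, single i 1 = D := by
        rw [mem_support_iff, Matrix.toMvPolynomial, coeff_sum] at hD
        obtain ⟨i, -, hi⟩ := Finset.exists_ne_zero_of_sum_ne_zero hD
        exact ⟨i, of_not_not fun h => hi (by rw [coeff_monomial, if_neg h])⟩
      rw [MonomialOrder.lex_le_iff, Finsupp.Lex.single_le_iff]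
      by_contra! hi
      exact mem_support_iff.1 hD (by rw [hcoeff, hlt j i hi])
    · exact MonomialOrder.lex.le_degree (by rw [mem_support_iff, hcoeff]; exact hlead j)
  simp only [← hdegree]
  rw [MonomialOrder.lex.coeff_prod_sum_degree, Finset.prod_ne_zero_iff]
  intro j _
  rw [MonomialOrder.leadingCoeff, hdegree, hcoeff]
  exact hlead j

end LinearForm

section Evaluation

open MvPolynomial (coeff)
open scoped Matrix

variable {p : ℕ} {J ι : Type*} [Fintype ι] [DecidableEq ι]
  {s : J → (ι →₀ ℕ) × (ι → ZMod p) → ZMod p} {χ : Matrix J ι (ZMod p)}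

lemma label_add_single (hs : ∀ j D g, s j (D, g) = s j (D, 0) + (χ *ᵥ g) j) (j : J) (D : ι →₀ ℕ)
    (g : ι → ZMod p) (i : ι) (a : ZMod p) :
    s j (D, g + Pi.single i a) = s j (D, g) + a * χ j i := by
  rw [hs, hs j D g, Matrix.mulVec_add, Matrix.mulVec_single]
  simp [add_assoc]

variable [NeZero p] {ord : ι ↪ ℕ}

lemma exists_pathChain_eq_cone {E : Type*} (V : (ι →₀ ℕ) × (ι → ZMod p) → E) (n : ℕ) (D : ι →₀ ℕ)
    (g : ι → ZMod p) : ∃ c, pathChain ord V n D g = cone (V (D, g)) c := by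
  cases n <;> exact ⟨_, rfl⟩

lemma evalCochain_coboundaryProduct_translate
    (hs : ∀ j D g, s j (D, g) = s j (D, 0) + (χ *ᵥ g) j) (js : List J) (n : ℕ) (D : ι →₀ ℕ)
    (g : ι → ZMod p) : evalCochain (coboundaryProduct s js) (pathChain ord id n D g) =
      evalCochain (coboundaryProduct s js) (pathChain ord id n D 0) := by
  have hg := mapChain_pathChain (V := id) (V' := id) (ord := ord)
    (f := fun x => (x.1, x.2 + g)) (h := g) (fun _ _ => rfl) n D 0
  rw [zero_add] at hg
  rw [← hg, evalCochain_mapChain]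
  congr 2
  ext l
  refine coboundaryProduct_map (t := χ *ᵥ g) fun j x _ => ?_
  rw [hs, hs j x.1 x.2, Matrix.mulVec_add, Pi.add_apply, add_assoc]

lemma evalCochain_carryProduct_translate
    (hs : ∀ j D g, s j (D, g) = s j (D, 0) + (χ *ᵥ g) j) (js : List J) (n : ℕ) (D : ι →₀ ℕ)
    (g : ι → ZMod p) : evalCochain (carryProduct s js) (pathChain ord id n D g) =
      evalCochain (carryProduct s js) (pathChain ord id n D 0) := by
  have hg := mapChain_pathChain (V := id) (V' := id) (ord := ord)
    (f := fun x => (x.1, x.2 + g)) (h := g) (fun _ _ => rfl) n D 0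
  rw [zero_add] at hg
  rw [← hg, evalCochain_mapChain]
  congr 2
  ext l
  refine carryProduct_map (t := χ *ᵥ g) fun j x _ => ?_
  rw [hs, hs j x.1 x.2, Matrix.mulVec_add, Pi.add_apply, add_assoc]

lemma evalCochain_coboundaryProduct_cons (j : J) (js : List J) (n : ℕ) (D : ι →₀ ℕ)
    (g : ι → ZMod p) :
    evalCochain (coboundaryProduct s (j :: js)) (pathChain ord id (n + 1) D g) =
      ∑ i, shuffleSign ord (ZMod p) D i * ∑ a : ZMod p, resolutionCoeff (D i) a *
        (s j (D - single i 1, g + Pi.single i a) - s j (D, g)) *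
        evalCochain (coboundaryProduct s js)
          (pathChain ord id n (D - single i 1) (g + Pi.single i a)) := by
  simp only [pathChain_succ, pathFace, map_sum, map_smul, Finset.mul_sum]
  refine Finset.sum_congr rfl fun i _ => Finset.sum_congr rfl fun a _ => ?_
  obtain ⟨c, hc⟩ := exists_pathChain_eq_cone (ord := ord) id n (D - single i 1) (g + Pi.single i a)
  rw [hc, coboundaryProduct, List.foldr_cons, evalCochain_cupOne, smul_eq_mul]
  simp only [id, coboundaryProduct]
  ring

lemma evalCochain_carryProduct_cons (j : J) (js : List J) (n : ℕ) (D : ι →₀ ℕ) (g : ι → ZMod p) :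
    evalCochain (carryProduct s (j :: js)) (pathChain ord id (n + 2) D g) =
      ∑ i, ∑ k, (shuffleSign ord (ZMod p) D i * shuffleSign ord (ZMod p) (D - single i 1) k) *
        ∑ a : ZMod p, ∑ b : ZMod p,
          resolutionCoeff (D i) a * resolutionCoeff ((D - single i 1 : ι →₀ ℕ) k) b *
          (carry (s j (D - single i 1, g + Pi.single i a) - s j (D, g))
            (s j (D - single i 1 - single k 1, g + Pi.single i a + Pi.single k b) -
              s j (D - single i 1, g + Pi.single i a)) : ZMod p) *
          evalCochain (carryProduct s js) (pathChain ord id n (D - single i 1 - single k 1)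
            (g + Pi.single i a + Pi.single k b)) := by
  simp only [pathChain_succ, pathFace, map_sum, map_smul, Finset.mul_sum, Finset.smul_sum]
  refine Finset.sum_congr rfl fun i _ => ?_
  rw [Finset.sum_comm]
  refine Finset.sum_congr rfl fun k _ => Finset.sum_congr rfl fun a _ =>
    Finset.sum_congr rfl fun b _ => ?_
  obtain ⟨c, hc⟩ := exists_pathChain_eq_cone (ord := ord) id n (D - single i 1 - single k 1)
    (g + Pi.single i a + Pi.single k b)
  rw [hc, carryProduct, List.foldr_cons, evalCochain_cupTwo]
  simp only [id, carryProduct, smul_eq_mul]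
  ring

lemma evalCochain_coboundaryProduct_pathChain {s : J → (ι →₀ ℕ) × (ι → ZMod 2) → ZMod 2}
    {χ : Matrix J ι (ZMod 2)} (hs : ∀ j D g, s j (D, g) = s j (D, 0) + (χ *ᵥ g) j) (js : List J)
    (D : ι →₀ ℕ) (hD : ∑ i, D i = js.length) :
    evalCochain (coboundaryProduct s js) (pathChain ord id js.length D 0) =
      coeff D (js.map χ.toMvPolynomial).prod := by
  induction js generalizing D with
  | nil =>
    obtain rfl : D = 0 := Finsupp.ext (by simpa using hD)
    simp [pathChain_zero, coboundaryProduct, unitCochain]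
  | cons j js ih =>
    rw [List.length_cons, evalCochain_coboundaryProduct_cons, List.map_cons, List.prod_cons,
      coeff_toMvPolynomial_mul]
    refine Finset.sum_congr rfl fun i _ => ?_
    split_ifs with hi
    · rw [shuffleSign_of_eq_zero hi, zero_mul]
    have hsum := sum_sub_single_of_mem hi (Finset.mem_univ i)
    rw [List.length_cons] at hD
    have hsign : shuffleSign ord (ZMod 2) D i = 1 := by
      rw [shuffleSign, if_neg hi, ZMod.neg_eq_self_mod_two, one_pow]
    simp only [evalCochain_coboundaryProduct_translate hs js _ _ (0 + _), label_add_single hs,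
      hsign, one_mul, ← Finset.sum_mul, sum_resolutionCoeff_mul_of_two]
    rw [ih _ (by lia)]

/-- The first factor consumes two steps of each path: two steps in the same direction contribute the
value of the character, and two steps in different directions cancel against the same steps in the
other order. -/
lemma evalCochain_carryProduct_pathChain (hs : ∀ j D g, s j (D, g) = s j (D, 0) + (χ *ᵥ g) j)
    (js : List J) (D : ι →₀ ℕ) (hD : ∑ i, D i = js.length) :
    evalCochain (carryProduct s js) (pathChain ord id (2 * js.length) (2 • D) 0) =
      coeff D (js.map χ.toMvPolynomial).prod := by
  induction js generalizing D with
  | nil =>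
    obtain rfl : D = 0 := Finsupp.ext (by simpa using hD)
    simp [pathChain_zero, carryProduct, unitCochain]
  | cons j js ih =>
    have hcancel (u v x y : ZMod p) : u + x + y - (v + x) = u - v + y := by ring
    rw [List.length_cons, mul_add, mul_one, evalCochain_carryProduct_cons, List.map_cons,
      List.prod_cons, coeff_toMvPolynomial_mul]
    simp only [evalCochain_carryProduct_translate hs js _ _ (0 + _ + _), label_add_single hs,
      ← Finset.sum_mul, hcancel, add_sub_right_comm]
    rw [sum_sum_eq_sum_diag]
    · refine Finset.sum_congr rfl fun i _ => ?_
      split_ifs with hi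
      · rw [shuffleSign_of_eq_zero (by simpa using hi), zero_mul, zero_mul]
      have hsum := sum_sub_single_of_mem hi (Finset.mem_univ i)
      have hsub : 2 • D - single i 1 - single i 1 = 2 • (D - single i 1) := by
        ext k; simp only [Finsupp.tsub_apply, Finsupp.smul_apply, smul_eq_mul]; lia
      rw [List.length_cons] at hD
      rw [shuffleSign_mul_self (by simpa using Nat.one_le_iff_ne_zero.2 hi),
        Finsupp.tsub_apply, Finsupp.single_eq_same,
        sum_resolutionCoeff_mul_carry (by simp) (by simpa using hi), hsub, ih _ (by lia), one_mul]
    · intro i k hik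
      rw [shuffleSign_antisymm _ hik, neg_mul, tsub_right_comm, Finsupp.tsub_apply,
        Finsupp.tsub_apply, Finsupp.single_eq_of_ne hik, Finsupp.single_eq_of_ne hik.symm,
        tsub_zero, tsub_zero, sum_resolutionCoeff_mul_carry_comm (by simp) (by simp)]
      ring

end Evaluation

/-! ### Labels -/

/-- The argument of `w`, measured in sectors of angle `2π / p`. -/
def sectorCoord (p : ℕ) (w : ℂ) : ℝ :=
  p * (w.arg / (2 * Real.pi))

/-- The index of the sector containing `w` when the plane is cut into `p` equal sectors. The
argument ranges over `(-π, π]`, so the index is only meaningful modulo `p`. -/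
def sectorLabel (p : ℕ) (w : ℂ) : ZMod p :=
  (⌊sectorCoord p w⌋ : ℤ)

lemma exists_sectorCoord_mul (p : ℕ) {z w : ℂ} (hz : z ≠ 0) (hw : w ≠ 0) :
    ∃ k : ℤ, sectorCoord p (z * w) = sectorCoord p z + sectorCoord p w + (p * k : ℤ) := by
  have h := Complex.arg_mul_coe_angle hz hw
  rw [← Real.Angle.coe_add, Real.Angle.angle_eq_iff_two_pi_dvd_sub] at h
  obtain ⟨k, hk⟩ := h
  refine ⟨k, ?_⟩
  have hpi := Real.pi_ne_zero
  rw [sectorCoord, sectorCoord, sectorCoord, eq_add_of_sub_eq hk]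
  push_cast
  field_simp
  ring

lemma sectorLabel_eq_floor {p : ℕ} {w : ℂ} {t : ℝ} {k : ℤ}
    (h : sectorCoord p w = t + (p * k : ℤ)) : sectorLabel p w = (⌊t⌋ : ℤ) := by
  rw [sectorLabel, h, Int.floor_add_intCast]
  simp

lemma exists_sectorCoord_stdAddChar {p : ℕ} [NeZero p] (a : ZMod p) :
    ∃ k : ℤ, sectorCoord p (ZMod.stdAddChar a) = a.val + (p * k : ℤ) := by
  have hp0 : (p : ℝ) ≠ 0 := NeZero.ne _
  have hpi := Real.pi_ne_zero
  have hexp : (ZMod.stdAddChar a : ℂ) =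
      Complex.exp (((2 * Real.pi * a.val / p : ℝ) : ℂ) * Complex.I) := by
    conv_lhs => rw [← ZMod.natCast_zmod_val a, ← Int.cast_natCast, ZMod.stdAddChar_coe]
    push_cast
    ring_nf
  have harg : ((ZMod.stdAddChar a : ℂ).arg : Real.Angle) = (2 * Real.pi * a.val / p : ℝ) := by
    rw [hexp, Complex.arg_exp_mul_I, Real.Angle.coe_toIocMod]
  rw [Real.Angle.angle_eq_iff_two_pi_dvd_sub] at harg
  obtain ⟨k, hk⟩ := harg
  refine ⟨k, ?_⟩
  rw [sectorCoord, eq_add_of_sub_eq hk]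
  push_cast
  field_simp
  ring

lemma stdAddChar_ne_zero {p : ℕ} [NeZero p] (a : ZMod p) : ZMod.stdAddChar a ≠ 0 :=
  (AddChar.val_isUnit _ a).ne_zero

lemma sectorLabel_stdAddChar_mul {p : ℕ} [NeZero p] (a : ZMod p) {w : ℂ} (hw : w ≠ 0) :
    sectorLabel p (ZMod.stdAddChar a * w) = sectorLabel p w + a := by
  obtain ⟨k, hk⟩ := exists_sectorCoord_mul p (stdAddChar_ne_zero a) hw
  obtain ⟨l, hl⟩ := exists_sectorCoord_stdAddChar a
  have h : sectorCoord p (ZMod.stdAddChar a * w) =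
      (sectorCoord p w + (a.val : ℤ)) + (p * (l + k) : ℤ) := by
    rw [hk, hl]
    push_cast
    ring
  rw [sectorLabel_eq_floor h, Int.floor_add_intCast, sectorLabel]
  simp

lemma floor_add_eq_or {t : ℝ} (x : ℝ) (ht : |t| < 1 / 2) :
    ⌊x + t⌋ = ⌊x - 1 / 2⌋ ∨ ⌊x + t⌋ = ⌊x - 1 / 2⌋ + 1 := by
  rw [abs_lt] at ht
  have hlow : ⌊x - 1 / 2⌋ ≤ ⌊x + t⌋ := Int.floor_le_floor (by linarith)
  have hupp : ⌊x + t⌋ ≤ ⌊x - 1 / 2⌋ + 1 := by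
    rw [← Int.floor_add_one]
    exact Int.floor_le_floor (by linarith)
  lia

lemma exists_abs_sectorCoord_lt (p : ℕ) :
    ∃ ε > 0, ∀ z : ℂ, ‖z - 1‖ < ε → |sectorCoord p z| < 1 / 2 := by
  have hcont : ContinuousAt (sectorCoord p) 1 :=
    continuousAt_const.mul ((Complex.continuousAt_arg (by simp)).div_const _)
  obtain ⟨ε, hε, h⟩ := Metric.continuousAt_iff.1 hcont (1 / 2) (by norm_num)
  refine ⟨ε, hε, fun z hz => ?_⟩
  have hdist := h (x := z) (by rwa [dist_eq_norm])
  rwa [Real.dist_eq, sectorCoord, sectorCoord, Complex.arg_one, zero_div, mul_zero, sub_zero]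
    at hdist

lemma exists_sectorLabel_eq_or (p : ℕ) : ∃ ε : ℝ, 0 < ε ∧ ε ≤ 1 ∧ ∀ w : ℂ, w ≠ 0 →
    ∃ a : ZMod p, ∀ w' : ℂ, ‖w' - w‖ < ε * ‖w‖ →
      sectorLabel p w' = a ∨ sectorLabel p w' = a + 1 := by
  obtain ⟨ε, hε, hsmall⟩ := exists_abs_sectorCoord_lt p
  refine ⟨min ε 1, by positivity, min_le_right _ _, fun w hw => ?_⟩
  refine ⟨(⌊sectorCoord p w - 1 / 2⌋ : ℤ), fun w' hw' => ?_⟩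
  have hquot : ‖w' / w - 1‖ < min ε 1 := by
    rwa [div_sub_one hw, norm_div, div_lt_iff₀ (norm_pos_iff.2 hw)]
  have hne : w' / w ≠ 0 := by
    intro h
    simp [h] at hquot
  obtain ⟨k, hk⟩ := exists_sectorCoord_mul p hne hw
  rw [div_mul_cancel₀ _ hw, add_comm (sectorCoord p (w' / w))] at hk
  rw [sectorLabel_eq_floor hk]
  have hfloor := floor_add_eq_or (sectorCoord p w) (hsmall _ (hquot.trans_le (min_le_left _ _)))
  exact_mod_cast hfloor.imp (congrArg _) (congrArg (Int.cast (R := ZMod p)))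

lemma sectorLabel_eq_of_im_eq_zero (p : ℕ) {w w' : ℂ} (hw : w.im = 0) (hw' : w'.im = 0)
    (h : ‖w' - w‖ < ‖w‖) : sectorLabel p w' = sectorLabel p w := by
  lift w to ℝ using hw
  lift w' to ℝ using hw'
  rw [← Complex.ofReal_sub, Complex.norm_real, Complex.norm_real, Real.norm_eq_abs,
    Real.norm_eq_abs] at h
  suffices harg : (w' : ℂ).arg = (w : ℂ).arg by rw [sectorLabel, sectorLabel, sectorCoord,
    sectorCoord, harg]
  rcases lt_or_ge w 0 with hneg | hnonneg
  · rw [abs_of_neg hneg] at h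
    rw [Complex.arg_ofReal_of_neg hneg,
      Complex.arg_ofReal_of_neg (by linarith [le_abs_self (w' - w)])]
  · rw [abs_of_nonneg hnonneg] at h
    rw [Complex.arg_ofReal_of_nonneg hnonneg,
      Complex.arg_ofReal_of_nonneg (by linarith [neg_abs_le (w' - w)])]

lemma exists_equivariant_label {E Γ : Type*} [AddCommGroup Γ] [AddAction Γ E] {P : Set E}
    (hP : ∀ g : Γ, ∀ x ∈ P, g +ᵥ x ∈ P) (hfree : ∀ x ∈ P, Function.Injective fun g : Γ => g +ᵥ x) :
    ∃ t : E → Γ, ∀ g, ∀ x ∈ P, t (g +ᵥ x) = t x + g := by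
  let rep : E → E := fun x => (Quotient.mk (AddAction.orbitRel Γ E) x).out
  have hrep : ∀ x, ∃ g : Γ, g +ᵥ rep x = x := fun x =>
    
    AddAction.orbitRel_apply.1 ((AddAction.orbitRel Γ E).symm
      (Quotient.mk_out (s := AddAction.orbitRel Γ E) x))
  choose t ht using hrep
  refine ⟨t, fun g x hx => ?_⟩
  have hrepP : rep x ∈ P := by
    rw [eq_neg_vadd_iff.2 (ht x)]
    exact hP _ _ hx
  have hconst : rep (g +ᵥ x) = rep x :=
    congrArg Quotient.out (Quotient.sound (s := AddAction.orbitRel Γ E)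
      (AddAction.orbitRel_apply.2 (AddAction.mem_orbit x g)))
  refine hfree _ hrepP ?_
  calc t (g +ᵥ x) +ᵥ rep x = g +ᵥ x := by rw [← hconst, ht]
    _ = (t x + g) +ᵥ rep x := by rw [add_comm, add_vadd, ht]

/-! ### A Borsuk–Ulam theorem for elementary abelian groups -/

section EulerCochain

open scoped Matrix

variable {p : ℕ} {E J : Type*}

/-- The degree of the Euler class of a nontrivial character of an elementary abelian `p`-group: the
character defines a real line bundle for `p = 2` and a complex line bundle otherwise. -/
def charDegree (p : ℕ) : ℕ := if p = 2 then 1 else 2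

lemma charDegree_pos (p : ℕ) : 0 < charDegree p := by
  rw [charDegree]
  split_ifs <;> simp

lemma charDegree_dvd_iff_even_mul {p k : ℕ} (hp : p.Prime) :
    charDegree p ∣ k ↔ Even (p * k) := by
  rcases hp.eq_two_or_odd' with rfl | hodd
  · simp [charDegree]
  · rw [charDegree, if_neg (by rintro rfl; exact absurd hodd (by decide)), Nat.even_mul,
      or_iff_right (Nat.not_even_iff_odd.2 hodd), even_iff_two_dvd]

lemma charDegree_dvd_or_dvd_add_one (p k : ℕ) : charDegree p ∣ k ∨ charDegree p ∣ k + 1 := by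
  rw [charDegree]
  split_ifs <;> lia

/-- The product of the Euler classes, modulo `p`, of the line bundles described by the labellings
`s j`, `j ∈ js`. -/
def eulerCochain (s : J → E → ZMod p) (js : List J) : List E → ZMod p :=
  if p = 2 then coboundaryProduct s js else carryProduct s js

lemma isCocycle_eulerCochain [NeZero p] (s : J → E → ZMod p) (js : List J) :
    IsCocycle (eulerCochain s js) := by
  rw [eulerCochain]
  split_ifs
  · exact isCocycle_coboundaryProduct s js
  · exact isCocycle_carryProduct s js

lemma eulerCochain_nil (s : J → E → ZMod p) (js : List J) : eulerCochain s js [] = 0 := by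
  rw [eulerCochain]
  cases js <;> split_ifs <;>
    simp [coboundaryProduct, carryProduct, unitCochain, cupOne, cupTwo]

lemma eulerCochain_eq_zero (hp : 2 ≤ p) {s : J → E → ZMod p} {js : List J} {l : List E} {j : J}
    (hj : j ∈ js) {a : ZMod p} (hl : ∀ x ∈ l, s j x = a ∨ p ≠ 2 ∧ s j x = a + 1) :
    eulerCochain s js l = 0 := by
  rw [eulerCochain]
  split_ifs with hp2
  · exact coboundaryProduct_eq_zero hj fun x hx => (hl x hx).resolve_right fun h => h.1 hp2
  · exact carryProduct_eq_zero (by lia) hj fun x hx => (hl x hx).imp_right And.right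

lemma eulerCochain_map {E' : Type*} {A : E → E'} {s : J → E → ZMod p} {s' : J → E' → ZMod p}
    {t : J → ZMod p} {js : List J} {l : List E} (h : ∀ j, ∀ x ∈ l, s' j (A x) = s j x + t j) :
    eulerCochain s' js (l.map A) = eulerCochain s js l := by
  rw [eulerCochain, eulerCochain]
  split_ifs
  · exact coboundaryProduct_map h
  · exact carryProduct_map h

variable {ι : Type*} [Fintype ι]

lemma isInvariantOn_eulerCochain [AddCommGroup E] [Module ℝ E] {s : J → E → ZMod p}
    {χ : Matrix J ι (ZMod p)} {act : (ι → ZMod p) → E →ₗ[ℝ] E} {P : Set E}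
    (hs : ∀ j g, ∀ x ∈ P, s j (act g x) = s j x + (χ *ᵥ g) j) (js : List J) :
    IsInvariantOn act P (evalCochain (eulerCochain s js)) := fun g l hl => by
  rw [Finsupp.linearCombination_single, Finsupp.linearCombination_single,
    eulerCochain_map (t := χ *ᵥ g) fun j x hx => hs j g x (hl (subset_hull hx))]

lemma evalCochain_eulerCochain_pathChain [DecidableEq ι] [NeZero p] {s : J → E → ZMod p}
    {χ : Matrix J ι (ZMod p)} (ord : ι ↪ ℕ) {V : (ι →₀ ℕ) × (ι → ZMod p) → E}
    (hs : ∀ j D g, s j (V (D, g)) = s j (V (D, 0)) + (χ *ᵥ g) j) (js : List J) {D : ι →₀ ℕ}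
    (hD : ∑ i, D i = js.length) :
    evalCochain (eulerCochain s js)
        (pathChain ord V (charDegree p * js.length) (charDegree p • D) 0) =
      (js.map χ.toMvPolynomial).prod.coeff D := by
  rw [← add_zero (0 : ι → ZMod p), ← mapChain_pathChain ord (f := V) (V := id) (h := 0) (by simp),
    evalCochain_mapChain]
  have hpull : (fun l => eulerCochain s js (l.map V)) = eulerCochain (fun j x => s j (V x)) js :=
    funext fun l => eulerCochain_map (t := 0) (by simp)
  rw [hpull]
  by_cases hp2 : p = 2
  · subst hp2
    simpa [charDegree, eulerCochain] using evalCochain_coboundaryProduct_pathChain hs js D hD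
  · simpa [charDegree, eulerCochain, hp2] using evalCochain_carryProduct_pathChain hs js D hD

end EulerCochain

section BorsukUlam

open scoped Matrix

variable {p : ℕ} {ι : Type*} [Fintype ι]

lemma isCycleMod_pathChain [DecidableEq ι] {E : Type*} [AddCommGroup E] [Module ℝ E] [NeZero p]
    {act : (ι → ZMod p) → E →ₗ[ℝ] E} {P : Set E} (ord : ι ↪ ℕ)
    {V : (ι →₀ ℕ) × (ι → ZMod p) → E} (hV : ∀ D g h, act h (V (D, g)) = V (D, g + h)) {n : ℕ}
    {D : ι →₀ ℕ} (hD : ∑ i, D i = n + 1)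
    (hP : ∀ i, pathChain ord V n (D - single i 1) 0 ∈ chainsOn (ZMod p) fun l => hull l ⊆ P) :
    IsCycleMod act P (pathChain ord V (n + 1) D 0) := by
  intro η hη
  have hconst : ∀ i a, η (pathChain ord V n (D - single i 1) (0 + Pi.single i a)) =
      η (pathChain ord V n (D - single i 1) 0) := fun i a => by
    rw [← mapChain_pathChain ord (V := V) fun D g => hV D g (Pi.single i a)]
    exact eqOn_chainsOn (F := η ∘ₗ mapChain (act (Pi.single i a))) (F' := η)
      (fun l hl => by simpa using hη _ l hl) (hP i)
  rw [boundary_pathChain_succ ord V n D 0 hD, pathFace]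
  simp only [map_sum, map_smul, hconst, ← Finset.sum_smul]
  simp [sum_resolutionCoeff, ← Finset.mul_sum]

lemma exists_norm_sub_lt_mul_norm {E F : Type*} [PseudoMetricSpace E] [NormedAddCommGroup F]
    {P : Set E} (hP : IsCompact P) {f : E → F} (hf : ContinuousOn f P) (hne : ∀ x ∈ P, f x ≠ 0)
    {ε : ℝ} (hε : 0 < ε) :
    ∃ δ > 0, ∀ x ∈ P, ∀ y ∈ P, dist y x < δ → ‖f y - f x‖ < ε * ‖f x‖ := by
  obtain rfl | hPne := P.eq_empty_or_nonempty
  · exact ⟨1, one_pos, by simp⟩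
  obtain ⟨x₀, hx₀, hmin⟩ := hP.exists_isMinOn hPne hf.norm
  have hpos : 0 < ε * ‖f x₀‖ := mul_pos hε (norm_pos_iff.2 (hne x₀ hx₀))
  obtain ⟨δ, hδ, h⟩ :=
    Metric.uniformContinuousOn_iff.1 (hP.uniformContinuousOn_of_continuous hf) _ hpos
  refine ⟨δ, hδ, fun x hx y hy hxy => ?_⟩
  rw [← dist_eq_norm]
  exact (h y hy x hx hxy).trans_le (mul_le_mul_of_nonneg_left (hmin hx) hε.le)

lemma exists_norm_apply_eq_norm {J F : Type*} [Fintype J] [Nonempty J] [SeminormedAddCommGroup F]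
    (f : J → F) : ∃ j, ‖f j‖ = ‖f‖ := by
  obtain ⟨j, hj⟩ := Finite.exists_max fun j => ‖f j‖
  exact ⟨j, (norm_le_pi_norm f j).antisymm ((pi_norm_le_iff_of_nonempty f).2 hj)⟩

lemma exists_sectorLabel_eq_or_of_real (p : ℕ) : ∃ ε > 0, ∀ w : ℂ, w ≠ 0 → (p = 2 → w.im = 0) →
    ∃ a : ZMod p, ∀ w' : ℂ, (p = 2 → w'.im = 0) → ‖w' - w‖ < ε * ‖w‖ →
      w' ≠ 0 ∧ (sectorLabel p w' = a ∨ p ≠ 2 ∧ sectorLabel p w' = a + 1) := by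
  obtain ⟨ε, hε, hε1, hsector⟩ := exists_sectorLabel_eq_or p
  refine ⟨ε, hε, fun w hw hreal => ?_⟩
  have hlt : ∀ w', ‖w' - w‖ < ε * ‖w‖ → ‖w' - w‖ < ‖w‖ := fun w' h =>
    h.trans_le (mul_le_of_le_one_left (norm_nonneg w) hε1)
  have hne : ∀ w', ‖w' - w‖ < ε * ‖w‖ → w' ≠ 0 := fun w' h h0 => by
    simpa [h0] using hlt w' h
  by_cases hp2 : p = 2
  · exact ⟨sectorLabel p w, fun w' hreal' h =>
      ⟨hne w' h, .inl (sectorLabel_eq_of_im_eq_zero p (hreal hp2) (hreal' hp2) (hlt w' h))⟩⟩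
  · obtain ⟨a, ha⟩ := hsector w hw
    exact ⟨a, fun w' _ h => ⟨hne w' h, (ha w' h).imp_right (And.intro hp2)⟩⟩

lemma exists_equivariant_sectorLabel {E J : Type*} [AddCommGroup E] [Module ℝ E] [NeZero p]
    {act : (ι → ZMod p) → E →ₗ[ℝ] E} {P : Set E} (act_zero : ∀ x, act 0 x = x)
    (act_add : ∀ g h x, act (g + h) x = act g (act h x)) (hP : ∀ g, ∀ x ∈ P, act g x ∈ P)
    (hfree : ∀ x ∈ P, Function.Injective fun g => act g x) {χ : Matrix J ι (ZMod p)}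
    {φ : J → E → ℂ}
    (hφ : ∀ j g, ∀ x ∈ P, φ j (act g x) = ZMod.stdAddChar ((χ *ᵥ g) j) * φ j x) :
    ∃ s : J → E → ZMod p, (∀ j g, ∀ x ∈ P, s j (act g x) = s j x + (χ *ᵥ g) j) ∧
      ∀ j x, φ j x ≠ 0 → s j x = sectorLabel p (φ j x) := by
  classical
  let _ : AddAction (ι → ZMod p) E :=
    { vadd := fun g => act g, zero_vadd := act_zero, add_vadd := act_add }
  obtain ⟨t, ht⟩ := exists_equivariant_label hP hfree
  have ht : ∀ g, ∀ x ∈ P, t (act g x) = t x + g := ht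
  refine ⟨fun j x => if φ j x = 0 then (χ *ᵥ t x) j else sectorLabel p (φ j x),
    fun j g x hx => ?_, fun j x hx => if_neg hx⟩
  by_cases hzero : φ j x = 0
  · simp [hφ j g x hx, hzero, ht g x hx, Matrix.mulVec_add]
  · simp [hφ j g x hx, hzero, stdAddChar_ne_zero, sectorLabel_stdAddChar_mul]

lemma exists_equivariant_label_locally_eq {E J : Type*} [NormedAddCommGroup E] [NormedSpace ℝ E]
    [NeZero p] [Finite J] {act : (ι → ZMod p) → E →ₗ[ℝ] E} (act_zero : ∀ x, act 0 x = x)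
    (act_add : ∀ g h x, act (g + h) x = act g (act h x)) {P : Set E} (hPc : IsCompact P)
    (hP : ∀ g, ∀ x ∈ P, act g x ∈ P) (hfree : ∀ x ∈ P, Function.Injective fun g => act g x)
    {χ : Matrix J ι (ZMod p)} {φ : J → E → ℂ} (hφc : ∀ j, ContinuousOn (φ j) P)
    (hφ : ∀ j g, ∀ x ∈ P, φ j (act g x) = ZMod.stdAddChar ((χ *ᵥ g) j) * φ j x)
    (hreal : p = 2 → ∀ j, ∀ x ∈ P, (φ j x).im = 0) (hne : ∀ x ∈ P, ∃ j, φ j x ≠ 0) :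
    ∃ s : J → E → ZMod p, (∀ j g, ∀ x ∈ P, s j (act g x) = s j x + (χ *ᵥ g) j) ∧
      ∃ δ > 0, ∀ x ∈ P, ∃ j a, ∀ y ∈ P, dist y x < δ → s j y = a ∨ p ≠ 2 ∧ s j y = a + 1 := by
  have := Fintype.ofFinite J
  let Φ : E → J → ℂ := fun x j => φ j x
  have hΦ : ∀ x ∈ P, Φ x ≠ 0 := fun x hx h => (hne x hx).elim fun j hj => hj (congrFun h j)
  obtain ⟨ε, hε, hsector⟩ := exists_sectorLabel_eq_or_of_real p
  obtain ⟨δ, hδ, hclose⟩ := exists_norm_sub_lt_mul_norm hPc (f := Φ) (continuousOn_pi.2 hφc)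
    hΦ hε
  obtain ⟨s, hs, hsφ⟩ := exists_equivariant_sectorLabel act_zero act_add hP hfree hφ
  refine ⟨s, hs, δ, hδ, fun x hx => ?_⟩
  have : Nonempty J := ⟨(hne x hx).choose⟩
  obtain ⟨j, hj⟩ := exists_norm_apply_eq_norm (Φ x)
  have hjx : φ j x ≠ 0 := norm_pos_iff.1 (hj ▸ norm_pos_iff.2 (hΦ x hx))
  obtain ⟨a, ha⟩ := hsector (φ j x) hjx fun hp2 => hreal hp2 j x hx
  refine ⟨j, a, fun y hy hyx => ?_⟩
  have hnorm : ‖φ j y - φ j x‖ < ε * ‖φ j x‖ :=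
    (norm_le_pi_norm (Φ y - Φ x) j).trans_lt (hj ▸ hclose x hx y hy hyx)
  have hy' := ha (φ j y) (fun hp2 => hreal hp2 j y hy) hnorm
  rw [hsφ j y hy'.1]
  exact hy'.2

lemma sum_eq_card_of_coeff_prod_toMvPolynomial_ne_zero {R J : Type*} [CommRing R] [Fintype J]
    {χ : Matrix J ι R} {D : ι →₀ ℕ} (hD : (∏ j, χ.toMvPolynomial j).coeff D ≠ 0) :
    ∑ i, D i = Fintype.card J := by
  have hhom := MvPolynomial.IsHomogeneous.prod Finset.univ χ.toMvPolynomial 1 fun j _ =>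
    χ.toMvPolynomial_isHomogeneous j
  have := hhom hD
  simpa [Finsupp.weight_apply, Finsupp.sum_fintype] using this

theorem borsuk_ulam [DecidableEq ι] {E J : Type*} [NormedAddCommGroup E] [NormedSpace ℝ E]
    [Fact p.Prime] [Fintype J] {act : (ι → ZMod p) → E →ₗ[ℝ] E} (act_zero : ∀ x, act 0 x = x)
    (act_add : ∀ g h x, act (g + h) x = act g (act h x)) {P : Set E} (hPc : IsCompact P)
    (hP : ∀ g, ∀ x ∈ P, act g x ∈ P) (hfree : ∀ x ∈ P, Function.Injective fun g => act g x)
    {χ : Matrix J ι (ZMod p)} {D₀ : ι →₀ ℕ} (hD₀ : (∏ j, χ.toMvPolynomial j).coeff D₀ ≠ 0)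
    (ord : ι ↪ ℕ) {V : (ι →₀ ℕ) × (ι → ZMod p) → E} (hVP : ∀ D g, V (D, g) ∈ P)
    (hV : ∀ D g h, act h (V (D, g)) = V (D, g + h))
    (hpath : ∀ n, ∀ D ≤ charDegree p • D₀, pathChain ord V n D 0 ∈
      chainsOn (ZMod p) fun l => l.length ≤ n + 1 ∧ hull l ⊆ P)
    {φ : J → E → ℂ} (hφc : ∀ j, ContinuousOn (φ j) P)
    (hφ : ∀ j g, ∀ x ∈ P, φ j (act g x) = ZMod.stdAddChar ((χ *ᵥ g) j) * φ j x)
    (hreal : p = 2 → ∀ j, ∀ x ∈ P, (φ j x).im = 0) :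
    ∃ x ∈ P, ∀ j, φ j x = 0 := by
  by_contra! hne
  obtain ⟨s, hs, δ, hδ, hlabel⟩ :=
    exists_equivariant_label_locally_eq act_zero act_add hPc hP hfree hφc hφ hreal hne
  let js : List J := Finset.univ.toList
  have : Nonempty J := ⟨(hne _ (hVP 0 0)).choose⟩
  obtain ⟨n, hn⟩ : ∃ n, charDegree p * js.length = n + 1 := Nat.exists_eq_succ_of_ne_zero
    (mul_ne_zero (charDegree_pos p).ne' (by simp [js]))
  have hdegree : ∑ i, D₀ i = js.length := by
    rw [sum_eq_card_of_coeff_prod_toMvPolynomial_ne_zero hD₀, Finset.length_toList,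
      Finset.card_univ]
  have hcycle : IsCycleMod act P (pathChain ord V (n + 1) (charDegree p • D₀) 0) :=
    isCycleMod_pathChain ord hV (by simp [← Finset.mul_sum, hdegree, hn])
      fun i => chainsOn_mono (fun l hl => hl.2) (hpath n _ tsub_le_self)
  have heval : evalCochain (eulerCochain s js)
      (pathChain ord V (n + 1) (charDegree p • D₀) 0) ≠ 0 := by
    rw [← hn, evalCochain_eulerCochain_pathChain (χ := χ) ord _ js hdegree, Finset.prod_map_toList]
    · exact hD₀
    · intro j D g
      rw [← hs j g _ (hVP D 0), hV, zero_add]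
  obtain ⟨l, hl, hlP, hlδ⟩ := hcycle.exists_small_simplex hPc.isBounded (hpath (n + 1) _ le_rfl)
    (isInvariantOn_eulerCochain hs js) (isCocycle_eulerCochain s js).evalCochain_boundary heval hδ
  rw [Finsupp.linearCombination_single, one_smul] at hl
  obtain ⟨x, hx⟩ := List.exists_mem_of_ne_nil l fun h => hl (h ▸ eulerCochain_nil s js)
  obtain ⟨j, a, ha⟩ := hlabel x (hlP x hx)
  exact hl (eulerCochain_eq_zero (Fact.out : p.Prime).two_le (j := j) (by simp [js]) (a := a)
    fun y hy => ha y (hlP y hy) (hlδ y hy x hx))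

end BorsukUlam

/-! ### Products of joins -/

section LeadingBlock

variable {J K R : Type*} [Fintype J] [Fintype K] {e : K → ℕ} [CommRing R] [IsDomain R]

lemma exists_coeff_prod_toMvPolynomial_ne_zero [DecidableEq K] {χ : Matrix J (Σ k, Fin (e k)) R}
    (rank : K ↪ ℕ) {block : J → K} (hblock : ∀ j, ∃ i, χ j ⟨block j, i⟩ ≠ 0)
    (hrank : ∀ j k, rank (block j) < rank k → ∀ i, χ j ⟨k, i⟩ = 0) :
    ∃ D, (∏ j, χ.toMvPolynomial j).coeff D ≠ 0 ∧
      ∀ k, ∑ i, D ⟨k, i⟩ = Finset.card {j | block j = k} := by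
  choose lead hlead hmin using fun j => exists_minimal_of_wellFoundedLT _ (hblock j)
  let _ : LinearOrder (Σ k, Fin (e k)) := LinearOrder.lift'
    (fun i => (toLex (OrderDual.toDual (rank i.1), (i.2 : ℕ)) : ℕᵒᵈ ×ₗ ℕ)) <| by
      rintro ⟨k, i⟩ ⟨k', i'⟩ h
      simp only [EmbeddingLike.apply_eq_iff_eq, Prod.mk.injEq] at h
      obtain ⟨rfl, h⟩ := h
      rw [Fin.ext h]
  refine ⟨∑ j, single ⟨block j, lead j⟩ 1, coeff_prod_toMvPolynomial_ne_zero hlead ?_, fun k => ?_⟩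
  · rintro j ⟨k, i⟩ hlt
    rcases Prod.Lex.toLex_lt_toLex.1 hlt with hk | ⟨hk, hi⟩
    · exact hrank j k hk i
    · obtain rfl := rank.injective hk
      by_contra hne
      exact (hmin j hne hi.le).not_gt hi
  · simp only [Finsupp.finsetSum_apply]
    rw [Finset.sum_comm, Finset.card_filter]
    refine Finset.sum_congr rfl fun j _ => ?_
    split_ifs with h
    · subst h
      simp [Finsupp.single_apply]
    · simp [h]

end LeadingBlock

section JoinProduct

variable {p : ℕ} {K : Type*} {e n : K → ℕ}

/-- The weights on the products, over all `k`, of `n k + 1` join coordinates and the elementary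
abelian group `(ZMod p) ^ e k`. -/
abbrev Weights (p : ℕ) (e n : K → ℕ) : Type _ :=
  ∀ k : K, Fin (n k + 1) → (Fin (e k) → ZMod p) → ℝ

/-- The component in block `k` of an element of the product of the groups `(ZMod p) ^ e k`. -/
def component (g : (Σ k, Fin (e k)) → ZMod p) (k : K) : Fin (e k) → ZMod p := fun i => g ⟨k, i⟩

lemma component_add (g h : (Σ k, Fin (e k)) → ZMod p) (k : K) :
    component (g + h) k = component g k + component h k := rfl

/-- The translation action of the product of the groups on weights. -/
def translate (g : (Σ k, Fin (e k)) → ZMod p) : Weights p e n →ₗ[ℝ] Weights p e n where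
  toFun x k c h := x k c (h - component g k)
  map_add' _ _ := rfl
  map_smul' _ _ := rfl

lemma translate_apply (g : (Σ k, Fin (e k)) → ZMod p) (x : Weights p e n) (k : K)
    (c : Fin (n k + 1)) (h : Fin (e k) → ZMod p) :
    translate g x k c h = x k c (h - component g k) := rfl

lemma translate_zero (x : Weights p e n) : translate 0 x = x := by
  ext k c h
  rw [translate_apply]
  exact congrArg (x k c) (sub_zero h)

lemma translate_add (g h : (Σ k, Fin (e k)) → ZMod p) (x : Weights p e n) :
    translate (g + h) x = translate g (translate h x) := by
  ext k c y
  simp only [translate_apply, component_add, sub_sub]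

/-- The vertex of the product of joins whose component in block `k` is the group element
`component g k` in the join coordinate given by the total degree of `D` in block `k`. The degree is
read modulo `n k + 1`, which plays no role for the degrees at most `n k` that occur. -/
def joinVertex (x : ((Σ k, Fin (e k)) →₀ ℕ) × ((Σ k, Fin (e k)) → ZMod p)) : Weights p e n :=
  fun k => Pi.single (Fin.ofNat (n k + 1) (∑ i, x.1 ⟨k, i⟩)) (Pi.single (component x.2 k) 1)

lemma joinVertex_apply (x : ((Σ k, Fin (e k)) →₀ ℕ) × ((Σ k, Fin (e k)) → ZMod p)) (k : K)
    (c : Fin (n k + 1)) (h : Fin (e k) → ZMod p) :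
    joinVertex x k c h =
      if c = Fin.ofNat (n k + 1) (∑ i, x.1 ⟨k, i⟩) ∧ h = component x.2 k then 1 else 0 := by
  by_cases hc : c = Fin.ofNat (n k + 1) (∑ i, x.1 ⟨k, i⟩) <;>
    simp [joinVertex, Pi.single_apply, hc, -Fin.ofNat_eq_cast]

lemma translate_joinVertex (D : (Σ k, Fin (e k)) →₀ ℕ) (g h : (Σ k, Fin (e k)) → ZMod p) :
    translate h (joinVertex (D, g) : Weights p e n) = joinVertex (D, g + h) := by
  ext k c y
  simp only [translate_apply, joinVertex_apply, component_add, sub_eq_iff_eq_add]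

/-- The order of the vertices along a lattice path: the degrees decrease, and the component of the
group element in a block changes only together with the degree in that block. -/
def PathOrder (x y : ((Σ k, Fin (e k)) →₀ ℕ) × ((Σ k, Fin (e k)) → ZMod p)) : Prop :=
  y.1 ≤ x.1 ∧ ∀ k, ∑ i, x.1 ⟨k, i⟩ = ∑ i, y.1 ⟨k, i⟩ → component x.2 k = component y.2 k

lemma PathOrder.trans {x y z : ((Σ k, Fin (e k)) →₀ ℕ) × ((Σ k, Fin (e k)) → ZMod p)}
    (hxy : PathOrder x y) (hyz : PathOrder y z) : PathOrder x z := by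
  refine ⟨hyz.1.trans hxy.1, fun k h => ?_⟩
  have hyx : ∑ i, y.1 ⟨k, i⟩ ≤ ∑ i, x.1 ⟨k, i⟩ := Finset.sum_le_sum fun i _ => hxy.1 _
  have hzy : ∑ i, z.1 ⟨k, i⟩ ≤ ∑ i, y.1 ⟨k, i⟩ := Finset.sum_le_sum fun i _ => hyz.1 _
  exact (hxy.2 k (hyx.antisymm' (h.trans_le hzy))).trans (hyz.2 k (hzy.antisymm' (h ▸ hyx)))

instance : IsTrans (((Σ k, Fin (e k)) →₀ ℕ) × ((Σ k, Fin (e k)) → ZMod p)) PathOrder :=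
  ⟨fun _ _ _ => PathOrder.trans⟩

lemma IsPathStep.pathOrder [DecidableEq (Σ k, Fin (e k))]
    {x y : ((Σ k, Fin (e k)) →₀ ℕ) × ((Σ k, Fin (e k)) → ZMod p)}
    (h : IsPathStep x y) : PathOrder x y := by
  obtain ⟨⟨k₀, i₀⟩, a, hne, rfl⟩ := h
  have hle : x.1 - single ⟨k₀, i₀⟩ 1 ≤ x.1 := tsub_le_self
  refine ⟨hle, fun k hk => ?_⟩
  rcases eq_or_ne k k₀ with rfl | hkk
  · refine absurd hk (Finset.sum_lt_sum (fun i _ => hle _) ⟨i₀, Finset.mem_univ _, ?_⟩).ne'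
    simpa using Nat.pos_of_ne_zero hne
  · ext i
    simp [component, hkk]

lemma joinVertex_mul_eq_zero {x y : ((Σ k, Fin (e k)) →₀ ℕ) × ((Σ k, Fin (e k)) → ZMod p)}
    (hxy : PathOrder x y) (hx : ∀ k, ∑ i, x.1 ⟨k, i⟩ ≤ n k) (k : K) (c : Fin (n k + 1))
    {h h' : Fin (e k) → ZMod p} (hne : h ≠ h') :
    (joinVertex x : Weights p e n) k c h * joinVertex y k c h' = 0 := by
  have hy : ∑ i, y.1 ⟨k, i⟩ ≤ n k := (Finset.sum_le_sum fun i _ => hxy.1 _).trans (hx k)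
  by_contra hprod
  simp only [joinVertex_apply, mul_ne_zero_iff, ite_ne_right_iff] at hprod
  obtain ⟨⟨⟨rfl, rfl⟩, -⟩, ⟨hdeg, rfl⟩, -⟩ := hprod
  refine hne (hxy.2 k ?_)
  simpa [Fin.ext_iff, Fin.ofNat, Nat.mod_eq_of_lt, Nat.lt_succ_of_le, hx k, hy] using hdeg

variable [NeZero p]

/-- The product over `k` of the `(n k + 1)`-fold joins of the discrete groups `(ZMod p) ^ e k`. -/
structure IsJoinPoint (x : Weights p e n) : Prop where
  nonneg : ∀ k c h, 0 ≤ x k c h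
  sum_eq_one : ∀ k, ∑ c, ∑ h, x k c h = 1
  mul_eq_zero : ∀ k c h h', h ≠ h' → x k c h * x k c h' = 0

variable (p e n) in
/-- The product of joins as a subset of the space of weights. -/
def joinProduct : Set (Weights p e n) := {x | IsJoinPoint x}

lemma IsJoinPoint.le_one {x : Weights p e n} (hx : IsJoinPoint x) (k : K) (c : Fin (n k + 1))
    (h : Fin (e k) → ZMod p) : x k c h ≤ 1 :=
  calc x k c h ≤ ∑ h, x k c h :=
        Finset.single_le_sum (fun h _ => hx.nonneg k c h) (Finset.mem_univ h)
    _ ≤ ∑ c, ∑ h, x k c h := Finset.single_le_sum (f := fun c => ∑ h, x k c h)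
        (fun c _ => Finset.sum_nonneg fun h _ => hx.nonneg k c h) (Finset.mem_univ c)
    _ = 1 := hx.sum_eq_one k

lemma isClosed_joinProduct : IsClosed (joinProduct p e n) := by
  have : joinProduct p e n = {x | (∀ k c h, 0 ≤ x k c h) ∧ (∀ k, ∑ c, ∑ h, x k c h = 1) ∧
      ∀ k c h h', h ≠ h' → x k c h * x k c h' = 0} :=
    Set.ext fun x => ⟨fun h => ⟨h.1, h.2, h.3⟩, fun h => ⟨h.1, h.2.1, h.2.2⟩⟩
  simp only [this, Set.ofPred_and, Set.ofPred_forall]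
  refine IsClosed.inter ?_ (IsClosed.inter ?_ ?_)
  · exact isClosed_iInter fun k => isClosed_iInter fun c => isClosed_iInter fun h =>
      isClosed_le (by fun_prop) (by fun_prop)
  · exact isClosed_iInter fun k => isClosed_eq (by fun_prop) (by fun_prop)
  · exact isClosed_iInter fun k => isClosed_iInter fun c => isClosed_iInter fun h =>
      isClosed_iInter fun h' => isClosed_iInter fun _ => isClosed_eq (by fun_prop) (by fun_prop)

lemma isCompact_joinProduct [Finite K] : IsCompact (joinProduct p e n) := by
  have := Fintype.ofFinite K
  refine Metric.isCompact_of_isClosed_isBounded isClosed_joinProduct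
    ((Metric.isBounded_closedBall (x := (0 : Weights p e n)) (r := 1)).subset fun x hx => ?_)
  rw [mem_closedBall_zero_iff]
  simp only [pi_norm_le_iff_of_nonneg zero_le_one]
  intro k c h
  rw [Real.norm_of_nonneg (hx.nonneg k c h)]
  exact hx.le_one k c h

lemma translate_mem_joinProduct (g : (Σ k, Fin (e k)) → ZMod p) (x : Weights p e n)
    (hx : x ∈ joinProduct p e n) : translate g x ∈ joinProduct p e n where
  nonneg k c h := hx.nonneg _ _ _
  sum_eq_one k := by
    rw [← hx.sum_eq_one k]
    exact Finset.sum_congr rfl fun c _ =>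
      Fintype.sum_equiv (Equiv.subRight (component g k)) _ _ fun h => rfl
  mul_eq_zero k c h h' hne := hx.mul_eq_zero k c _ _ fun heq => hne (sub_left_inj.1 heq)

lemma translate_injective_of_mem_joinProduct (x : Weights p e n) (hx : x ∈ joinProduct p e n) :
    Function.Injective fun g : (Σ k, Fin (e k)) → ZMod p => translate g x := by
  intro g g' h
  suffices ∀ k, component g k = component g' k by
    ext ⟨k, i⟩
    exact congrFun (this k) i
  intro k
  obtain ⟨c, -, hc⟩ := Finset.exists_ne_zero_of_sum_ne_zero (hx.sum_eq_one k ▸ one_ne_zero)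
  obtain ⟨y, -, hy⟩ := Finset.exists_ne_zero_of_sum_ne_zero hc
  have heq : x k c y = x k c (y + component g k - component g' k) := by
    simpa [translate_apply] using congrFun (congrFun (congrFun h k) c) (y + component g k)
  by_contra hne
  have hzero := hx.mul_eq_zero k c y (y + component g k - component g' k)
    fun hy => hne (by simpa [add_sub_assoc, sub_eq_zero] using hy)
  rw [← heq] at hzero
  exact hy (mul_self_eq_zero.1 hzero)

lemma hull_subset_joinProduct {l : List (Weights p e n)} (hl : ∀ x ∈ l, x ∈ joinProduct p e n)
    (hpair : l.Pairwise fun x y => ∀ k c h h', h ≠ h' → x k c h * y k c h' = 0) :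
    hull l ⊆ joinProduct p e n := by
  have : Std.Symm fun x y : Weights p e n => ∀ k c h h', h ≠ h' → x k c h * y k c h' = 0 :=
    ⟨fun x y hxy k c h h' hne => (mul_comm _ _).trans (hxy k c h' h hne.symm)⟩
  have hpair' := hpair.forall_of_forall fun x hx => (hl x hx).mul_eq_zero
  let Q : Set (Weights p e n) := {x | (∀ k c h, 0 ≤ x k c h) ∧ (∀ k, ∑ c, ∑ h, x k c h = 1) ∧
    ∀ k c h, (∀ y ∈ l, y k c h = 0) → x k c h = 0}
  have hQ : Convex ℝ Q := by
    intro x hx y hy a b ha hb hab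
    refine ⟨fun k c h => ?_, fun k => ?_, fun k c h hzero => ?_⟩
    · exact add_nonneg (mul_nonneg ha (hx.1 k c h)) (mul_nonneg hb (hy.1 k c h))
    · simp only [Pi.add_apply, Pi.smul_apply, smul_eq_mul, Finset.sum_add_distrib,
        ← Finset.mul_sum, hx.2.1 k, hy.2.1 k, mul_one, hab]
    · simp [hx.2.2 k c h hzero, hy.2.2 k c h hzero]
  have hlQ : hull l ⊆ Q := hull_subset hQ fun x hx =>
    ⟨(hl x hx).nonneg, (hl x hx).sum_eq_one, fun k c h hzero => hzero x hx⟩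
  refine fun x hx => ⟨(hlQ hx).1, (hlQ hx).2.1, fun k c h h' hne => ?_⟩
  by_contra hxx
  have hsupp : ∀ h, x k c h ≠ 0 → ∃ y ∈ l, y k c h ≠ 0 := fun h hxh => by
    by_contra! hzero
    exact hxh ((hlQ hx).2.2 k c h hzero)
  obtain ⟨y, hy, hyh⟩ := hsupp h (left_ne_zero_of_mul hxx)
  obtain ⟨y', hy', hyh'⟩ := hsupp h' (right_ne_zero_of_mul hxx)
  exact mul_ne_zero hyh hyh' (hpair' hy hy' k c h h' hne)

lemma joinVertex_mem_joinProduct (x : ((Σ k, Fin (e k)) →₀ ℕ) × ((Σ k, Fin (e k)) → ZMod p)) :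
    joinVertex x ∈ joinProduct p e n where
  nonneg k c h := by
    rw [joinVertex_apply]
    split_ifs <;> norm_num
  sum_eq_one k := by
    simp [joinVertex_apply, ite_and]
  mul_eq_zero k c h h' hne := by
    simp only [joinVertex_apply, mul_ite, mul_one, mul_zero, ite_eq_right_iff]
    exact fun h₁ h₂ => absurd (h₂.2.trans h₁.2.symm) hne

lemma pathChain_joinVertex_mem_chainsOn [DecidableEq (Σ k, Fin (e k))] [Fintype K]
    (ord : (Σ k, Fin (e k)) ↪ ℕ) (m : ℕ) {D : (Σ k, Fin (e k)) →₀ ℕ}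
    (hD : ∀ k, ∑ i, D ⟨k, i⟩ ≤ n k) (g : (Σ k, Fin (e k)) → ZMod p) :
    pathChain ord (joinVertex : _ → Weights p e n) m D g ∈
      chainsOn (ZMod p) fun l => l.length ≤ m + 1 ∧ hull l ⊆ joinProduct p e n := by
  refine chainsOn_mono ?_ (pathChain_mem_chainsOn ord _ m D g)
  rintro l ⟨t, ht, hchain, rfl⟩
  have hpath : ((D, g) :: t).Pairwise PathOrder :=
    List.isChain_iff_pairwise.1 (hchain.imp fun _ _ => IsPathStep.pathOrder)
  have hdeg : ∀ x ∈ (D, g) :: t, ∀ k, ∑ i, x.1 ⟨k, i⟩ ≤ n k := by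
    refine List.forall_mem_cons.2 ⟨hD, fun x hx k => ?_⟩
    exact (Finset.sum_le_sum fun i _ => ((List.pairwise_cons.1 hpath).1 x hx).1 _).trans (hD k)
  refine ⟨by simp [ht], hull_subset_joinProduct ?_ ?_⟩
  · simp only [List.mem_map]
    rintro _ ⟨x, -, rfl⟩
    exact joinVertex_mem_joinProduct x
  · exact List.pairwise_map.2 <| hpath.imp_of_mem fun hx _ hxy k c h h' =>
      joinVertex_mul_eq_zero hxy (hdeg _ hx) k c

end JoinProduct

open scoped Matrix in
theorem borsuk_ulam_joins {p : ℕ} [Fact p.Prime] {J K : Type*} [Finite J] [Fintype K]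
    {e n : K → ℕ} {χ : Matrix J (Σ k, Fin (e k)) (ZMod p)} (rank : K ↪ ℕ) {block : J → K}
    (hblock : ∀ j, ∃ i, χ j ⟨block j, i⟩ ≠ 0)
    (hrank : ∀ j k, rank (block j) < rank k → ∀ i, χ j ⟨k, i⟩ = 0)
    (hn : ∀ k, charDegree p * {j | block j = k}.ncard ≤ n k)
    {φ : J → Weights p e n → ℂ} (hφc : ∀ j, ContinuousOn (φ j) (joinProduct p e n))
    (hφ : ∀ j g, ∀ x ∈ joinProduct p e n,
      φ j (translate g x) = ZMod.stdAddChar ((χ *ᵥ g) j) * φ j x)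
    (hreal : p = 2 → ∀ j, ∀ x ∈ joinProduct p e n, (φ j x).im = 0) :
    ∃ x ∈ joinProduct p e n, ∀ j, φ j x = 0 := by
  classical
  have := Fintype.ofFinite J
  obtain ⟨D₀, hD₀, hdeg⟩ := exists_coeff_prod_toMvPolynomial_ne_zero rank hblock hrank
  obtain ⟨ord⟩ := nonempty_embedding_nat (Σ k, Fin (e k))
  refine borsuk_ulam (act := translate) translate_zero translate_add isCompact_joinProduct
    translate_mem_joinProduct translate_injective_of_mem_joinProduct hD₀ ord (V := joinVertex)
    (fun D g => joinVertex_mem_joinProduct (D, g)) translate_joinVertex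
    (fun m D hD => pathChain_joinVertex_mem_chainsOn ord m (fun k => ?_) 0) hφc hφ hreal
  calc ∑ i, D ⟨k, i⟩ ≤ ∑ i, charDegree p * D₀ ⟨k, i⟩ := Finset.sum_le_sum fun i _ => hD _
    _ ≤ n k := by
      rw [← Finset.mul_sum, hdeg k, ← Set.ncard_coe_finset, Finset.coe_filter_univ]
      exact hn k

/-! ### Fourier coefficients on elementary abelian groups -/

section Fourier

open scoped Matrix ComplexConjugate

variable {p : ℕ} [NeZero p] {ι : Type*} [Fintype ι]

/-- The complex character `g ↦ exp (2 π i (t ⬝ᵥ g) / p)` of `(ZMod p) ^ ι`. -/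
def dotChar (t : ι → ZMod p) : AddChar (ι → ZMod p) ℂ :=
  ZMod.stdAddChar.compAddMonoidHom (AddMonoidHom.mk' (t ⬝ᵥ ·) (dotProduct_add t))

lemma dotChar_apply (t g : ι → ZMod p) : dotChar t g = ZMod.stdAddChar (t ⬝ᵥ g) := rfl

lemma dotChar_zero_apply (g : ι → ZMod p) : dotChar 0 g = 1 := by
  rw [dotChar_apply, zero_dotProduct, AddChar.map_zero_eq_one]

lemma dotChar_neg_apply (t g : ι → ZMod p) : dotChar (-t) g = conj (dotChar t g) := by
  rw [dotChar_apply, neg_dotProduct, AddChar.map_neg_eq_conj, dotChar_apply]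

lemma dotChar_ne_zero {t : ι → ZMod p} (ht : t ≠ 0) : dotChar t ≠ 0 := by
  classical
  obtain ⟨i, hi⟩ := Function.ne_iff.1 ht
  refine fun h => hi (ZMod.injective_stdAddChar ?_)
  simpa [dotChar_apply] using DFunLike.congr_fun h (Pi.single i 1)

variable [DecidableEq ι]

/-- The Fourier coefficient of a function on `(ZMod p) ^ ι` at the character `dotChar (-t)`. -/
def charSum (t : ι → ZMod p) (A : (ι → ZMod p) → ℂ) : ℂ := ∑ g, dotChar t g * A g

lemma charSum_comp_sub (t γ : ι → ZMod p) (A : (ι → ZMod p) → ℂ) :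
    charSum t (fun g => A (g - γ)) = dotChar t γ * charSum t A := by
  rw [charSum, charSum, Finset.mul_sum]
  refine Fintype.sum_equiv (Equiv.subRight γ) _ _ fun g => ?_
  rw [← mul_assoc, ← AddChar.map_add_eq_mul, Equiv.subRight_apply, add_sub_cancel]

lemma charSum_const_of_ne_zero {t : ι → ZMod p} (ht : t ≠ 0) (a : ℂ) :
    charSum t (fun _ => a) = 0 := by
  rw [charSum, ← Finset.sum_mul, AddChar.sum_eq_zero_iff_ne_zero.2 (dotChar_ne_zero ht),
    zero_mul]

lemma charSum_neg_ofReal (t : ι → ZMod p) (w : (ι → ZMod p) → ℝ) :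
    charSum (-t) (fun g => (w g : ℂ)) = conj (charSum t fun g => (w g : ℂ)) := by
  simp only [charSum, map_sum, map_mul, Complex.conj_ofReal, dotChar_neg_apply]

lemma eq_zero_of_forall_charSum_eq_zero {A : (ι → ZMod p) → ℂ} (hA : ∀ t, charSum t A = 0) :
    A = 0 := by
  ext g₀
  have horth : ∀ g, ∑ t : ι → ZMod p, dotChar t (g - g₀) =
      if g = g₀ then (Fintype.card (ι → ZMod p) : ℂ) else 0 := by
    intro g
    have hcomm : ∀ t, dotChar t (g - g₀) = dotChar (g - g₀) t := fun t => by
      rw [dotChar_apply, dotProduct_comm, dotChar_apply]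
    simp only [hcomm]
    split_ifs with h
    · simp [h, dotChar_zero_apply]
    · exact AddChar.sum_eq_zero_iff_ne_zero.2 (dotChar_ne_zero (sub_ne_zero.2 h))
  have hinv : Fintype.card (ι → ZMod p) * A g₀ = 0 :=
    calc Fintype.card (ι → ZMod p) * A g₀ = ∑ g, (∑ t, dotChar t (g - g₀)) * A g := by
          simp [horth]
      _ = ∑ t, dotChar t (-g₀) * charSum t A := by
          simp only [charSum, Finset.mul_sum, Finset.sum_mul]
          rw [Finset.sum_comm]
          refine Finset.sum_congr rfl fun t _ => Finset.sum_congr rfl fun g _ => ?_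
          rw [← mul_assoc, ← AddChar.map_add_eq_mul, neg_add_eq_sub]
      _ = 0 := by simp [hA]
  exact (mul_eq_zero.1 hinv).resolve_left (Nat.cast_ne_zero.2 Fintype.card_ne_zero)

lemma eq_inv_card_of_charSum_eq_zero {H : Finset (ι → ZMod p)}
    (hH : ∀ t, t ≠ 0 → t ∈ H ∨ -t ∈ H) {w : (ι → ZMod p) → ℝ}
    (hw : charSum 0 (fun g => (w g : ℂ)) = 1)
    (hz : ∀ t ∈ H, charSum t (fun g => (w g : ℂ)) = 0) (g : ι → ZMod p) :
    w g = ((p : ℝ) ^ Fintype.card ι)⁻¹ := by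
  have hz' : ∀ t, t ≠ 0 → charSum t (fun g => (w g : ℂ)) = 0 := by
    intro t ht
    rcases hH t ht with h | h
    · exact hz t h
    · rw [← neg_neg t, charSum_neg_ofReal, hz _ h, map_zero]
  have hconst : (fun g => ((w g - ((p : ℝ) ^ Fintype.card ι)⁻¹ : ℝ) : ℂ)) = 0 := by
    refine eq_zero_of_forall_charSum_eq_zero fun t => ?_
    have hsub : charSum t (fun g => ((w g - ((p : ℝ) ^ Fintype.card ι)⁻¹ : ℝ) : ℂ)) =
        charSum t (fun g => (w g : ℂ)) - charSum t fun _ => ((p : ℂ) ^ Fintype.card ι)⁻¹ := by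
      simp [charSum, mul_sub]
    rw [hsub, sub_eq_zero]
    rcases eq_or_ne t 0 with rfl | ht
    · rw [hw]
      simp [charSum, dotChar_zero_apply, NeZero.ne p]
    · rw [hz' t ht, charSum_const_of_ne_zero ht]
  exact sub_eq_zero.1 (Complex.ofReal_eq_zero.1 (congrFun hconst g))

end Fourier

lemma exists_finset_half {G : Type*} [AddGroup G] [Fintype G] (hG : ∀ g : G, g ≠ 0 → -g ≠ g) :
    ∃ H : Finset G, 0 ∉ H ∧ (∀ g, g ≠ 0 → g ∈ H ∨ -g ∈ H) ∧ 2 * H.card ≤ Fintype.card G - 1 := by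
  classical
  obtain ⟨num⟩ := nonempty_embedding_nat G
  refine ⟨Finset.univ.filter fun g => num (-g) < num g, by simp, fun g hg => ?_, ?_⟩
  · simpa using (num.injective.ne (hG g hg)).lt_or_gt
  · rw [← Finset.card_univ, ← Finset.card_erase_of_mem (Finset.mem_univ 0), two_mul]
    nth_rewrite 2 [← Finset.card_map (Equiv.neg G).toEmbedding]
    rw [← Finset.card_union_of_disjoint]
    · refine Finset.card_le_card fun g hg => ?_
      rw [Finset.mem_erase]
      refine ⟨?_, Finset.mem_univ g⟩
      rintro rfl
      simp at hg
    · rw [Finset.disjoint_left]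
      intro g hg hg'
      simp only [Finset.mem_filter, Finset.mem_univ, true_and, Finset.mem_map_equiv,
        Equiv.neg_symm, Equiv.neg_apply, neg_neg] at hg hg'
      exact hg.not_gt hg'

lemma exists_finset_charDegree_mul_card_le (p : ℕ) [Fact p.Prime] (ι : Type*) [Fintype ι] :
    ∃ H : Finset (ι → ZMod p), 0 ∉ H ∧ (∀ t, t ≠ 0 → t ∈ H ∨ -t ∈ H) ∧
      charDegree p * H.card ≤ p ^ Fintype.card ι - 1 := by
  classical
  rw [charDegree]
  split_ifs with hp
  · exact ⟨Finset.univ.erase 0, by simp, fun t ht => by simp [ht],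
      by simp [Finset.card_erase_of_mem]⟩
  · have hneg : ∀ t : ι → ZMod p, t ≠ 0 → -t ≠ t := fun t ht h => by
      obtain ⟨i, hi⟩ := Function.ne_iff.1 ht
      exact ZMod.ne_neg_self ((Fact.out : p.Prime).odd_of_ne_two hp) hi (congrFun h i).symm
    simpa using exists_finset_half hneg

section Cancellation

variable {p : ℕ} [NeZero p]

lemma eq_zero_of_mul_stdAddChar_add_eq_zero (hp : Odd p) {a b : ℝ} (ha : 0 ≤ a) (hb : 0 ≤ b)
    {s t : ZMod p} (h : (a : ℂ) * ZMod.stdAddChar s + b * ZMod.stdAddChar t = 0) :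
    a = 0 ∧ b = 0 := by
  have hroot : ∀ t : ZMod p, (ZMod.stdAddChar t : ℂ) ^ p = 1 := fun t => by
    rw [← AddChar.map_nsmul_eq_pow, nsmul_eq_mul, CharP.cast_eq_zero, zero_mul,
      AddChar.map_zero_eq_one]
  have hpow := congrArg (· ^ p) (eq_neg_of_add_eq_zero_left h)
  simp only [hp.neg_pow, mul_pow, hroot, mul_one] at hpow
  have hpow' : a ^ p = -b ^ p := by exact_mod_cast hpow
  have ha' := pow_nonneg ha p
  have hb' := pow_nonneg hb p
  exact ⟨eq_zero_of_pow_eq_zero (by linarith), eq_zero_of_pow_eq_zero (by linarith)⟩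

lemma eq_zero_of_sum_mul_stdAddChar_eq_zero (hp : p = 2 ∨ Odd p) {ι : Type*} {s : Finset ι}
    (hs : s.card ≤ charDegree p) {a : ι → ℝ} (ha : ∀ i ∈ s, 0 ≤ a i) {t : ι → ZMod p}
    (h : ∑ i ∈ s, (a i : ℂ) * ZMod.stdAddChar (t i) = 0) : ∀ i ∈ s, a i = 0 := by
  classical
  have hle : s.card ≤ 2 := hs.trans (by rw [charDegree]; split_ifs <;> simp)
  interval_cases hcard : s.card
  · simp [Finset.card_eq_zero.1 hcard]
  · obtain ⟨i, rfl⟩ := Finset.card_eq_one.1 hcard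
    simpa [stdAddChar_ne_zero] using h
  · obtain ⟨i, j, hij, rfl⟩ := Finset.card_eq_two.1 hcard
    have hodd : Odd p := hp.resolve_left fun hp2 => by simp [charDegree, hp2] at hs
    rw [Finset.sum_pair hij] at h
    simpa using eq_zero_of_mul_stdAddChar_add_eq_zero hodd (ha i (by simp)) (ha j (by simp)) h

end Cancellation

/-! ### Homogeneous extensions and affine subspaces -/

section Homogenize

/-- Central projection of the nonnegative orthant to the standard simplex; the origin, which has no
projection, goes to the origin. -/
def normalize {N : ℕ} (y : Fin (N + 1) → ℝ) : EuclideanSpace ℝ (Fin (N + 1)) :=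
  WithLp.toLp 2 ((∑ c, y c)⁻¹ • y)

lemma normalize_mem_stdSimp {N : ℕ} {y : Fin (N + 1) → ℝ} (hy : ∀ c, 0 ≤ y c)
    (hsum : ∑ c, y c ≠ 0) : normalize y ∈ stdSimp N := by
  refine ⟨fun i => mul_nonneg (inv_nonneg.2 (Finset.sum_nonneg fun c _ => hy c)) (hy i), ?_⟩
  simp only [normalize, Pi.smul_apply, smul_eq_mul, ← Finset.mul_sum]
  exact inv_mul_cancel₀ hsum

lemma normalize_apply_eq_zero {N : ℕ} {y : Fin (N + 1) → ℝ} {c : Fin (N + 1)} (hc : y c = 0) :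
    normalize y c = 0 := by
  simp [normalize, hc]

lemma isCompact_stdSimp (N : ℕ) : IsCompact (stdSimp N) := by
  convert (isCompact_stdSimplex ℝ (Fin (N + 1))).image (PiLp.continuous_toLp 2 _)
  ext x
  exact ⟨fun hx => ⟨x.ofLp, hx, rfl⟩, by rintro ⟨y, hy, rfl⟩; exact hy⟩

lemma continuousAt_normalize {N : ℕ} {y : Fin (N + 1) → ℝ} (hsum : ∑ c, y c ≠ 0) :
    ContinuousAt normalize y := by
  have hs : ContinuousAt (fun y : Fin (N + 1) → ℝ => ∑ c, y c) y := by fun_prop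
  exact (PiLp.continuous_toLp 2 _).continuousAt.comp ((hs.inv₀ hsum).smul continuousAt_id)

variable {V : Type*} [NormedAddCommGroup V] [NormedSpace ℝ V]

/-- The extension of a map on the standard simplex to the nonnegative orthant that is homogeneous of
degree one. -/
def homogenize {N : ℕ} (F : EuclideanSpace ℝ (Fin (N + 1)) → V) (y : Fin (N + 1) → ℝ) : V :=
  (∑ c, y c) • F (normalize y)

lemma continuousOn_homogenize {N : ℕ} {F : EuclideanSpace ℝ (Fin (N + 1)) → V}
    (hF : ContinuousOn F (stdSimp N)) : ContinuousOn (homogenize F) {y | ∀ c, 0 ≤ y c} := by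
  obtain ⟨M, hM⟩ := (isCompact_stdSimp N).exists_bound_of_continuousOn hF
  intro y hy
  have hs : ContinuousAt (fun y : Fin (N + 1) → ℝ => ∑ c, y c) y := by fun_prop
  by_cases hsum : ∑ c, y c = 0
  · have hzero : homogenize F y = 0 := by rw [homogenize, hsum, zero_smul]
    rw [ContinuousWithinAt, hzero]
    refine Filter.Tendsto.zero_smul_isBoundedUnder_le
      (hsum ▸ hs.tendsto.mono_left nhdsWithin_le_nhds)
      (Filter.isBoundedUnder_of_eventually_le (a := max M ‖F (normalize 0)‖) ?_)
    filter_upwards [self_mem_nhdsWithin] with z hz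
    by_cases hz0 : ∑ c, z c = 0
    · simp [normalize, hz0]
    · exact (hM _ (normalize_mem_stdSimp hz hz0)).trans (le_max_left _ _)
  · refine hs.continuousWithinAt.smul <|
      (hF _ (normalize_mem_stdSimp hy hsum)).comp_of_preimage_mem_nhdsWithin
        (continuousAt_normalize hsum).continuousWithinAt ?_
    filter_upwards [self_mem_nhdsWithin, nhdsWithin_le_nhds (hs.eventually_ne hsum)] with z hz hz0
    exact normalize_mem_stdSimp hz hz0

end Homogenize

section AffineSubspace

variable {d : ℕ}

/-- The homogeneous coordinates of a point of `ℝ ^ d`, the last one being `1`. -/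
def homogeneousCoords (v : EuclideanSpace ℝ (Fin d)) : Fin (d + 1) → ℝ :=
  Fin.snoc (α := fun _ => ℝ) v.ofLp 1

lemma continuous_homogeneousCoords :
    Continuous (homogeneousCoords : EuclideanSpace ℝ (Fin d) → Fin (d + 1) → ℝ) := by
  refine continuous_pi fun i => ?_
  cases i using Fin.lastCases with
  | last => simpa [homogeneousCoords] using continuous_const
  | cast i => simpa [homogeneousCoords] using by fun_prop

lemma homogeneousCoords_injective :
    Function.Injective (homogeneousCoords : EuclideanSpace ℝ (Fin d) → Fin (d + 1) → ℝ) :=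
  fun _ _ h => WithLp.ofLp_injective 2 (Fin.snoc_injective2 h).1

lemma exists_affineSubspace_of_span_eq_top {W : Type*} [AddCommGroup W] [Module ℝ W]
    {u : Fin (d + 1) → W} (hu : Submodule.span ℝ (Set.range u) = ⊤)
    {v : EuclideanSpace ℝ (Fin d)} (hv : ∑ i, homogeneousCoords v i • u i = 0) :
    ∃ L : AffineSubspace ℝ (EuclideanSpace ℝ (Fin d)),
      (L : Set (EuclideanSpace ℝ (Fin d))).Nonempty ∧
      Module.finrank ℝ W + Module.finrank ℝ L.direction = d ∧
      ∀ v', ∑ i, homogeneousCoords v' i • u i = 0 → v' ∈ L := by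
  let A : EuclideanSpace ℝ (Fin d) →ₗ[ℝ] W :=
    Fintype.linearCombination ℝ (u ∘ Fin.castSucc) ∘ₗ
      (WithLp.linearEquiv 2 ℝ (Fin d → ℝ)).toLinearMap
  have hA : ∀ w, ∑ i, homogeneousCoords w i • u i = A w + u (Fin.last d) := fun w => by
    simp [homogeneousCoords, Fin.sum_univ_castSucc, A, Fintype.linearCombination_apply]
  -- The solution `v` shows that the constant terms `u (Fin.last d)` lie in the range of `A`.
  have hrange : LinearMap.range A = ⊤ := by
    rw [eq_top_iff, ← hu, Submodule.span_le]
    rintro _ ⟨i, rfl⟩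
    cases i using Fin.lastCases with
    | last => exact ⟨-v, by rw [map_neg, neg_eq_iff_add_eq_zero, ← hA, hv]⟩
    | cast i => exact ⟨EuclideanSpace.single i 1, by simp [A, Fintype.linearCombination_apply]⟩
  refine ⟨AffineSubspace.mk' v (LinearMap.ker A), ⟨v, AffineSubspace.self_mem_mk' _ _⟩, ?_, ?_⟩
  · rw [AffineSubspace.direction_mk', ← finrank_top ℝ W, ← hrange,
      A.finrank_range_add_finrank_ker, finrank_euclideanSpace_fin]
  · intro v' hv'
    rw [AffineSubspace.mem_mk', LinearMap.mem_ker, vsub_eq_sub, map_sub, sub_eq_zero]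
    exact add_right_cancel ((hA v').symm.trans (hv'.trans (hv.symm.trans (hA v))))

end AffineSubspace

section Frame

open scoped Matrix ComplexConjugate ComplexOrder

variable {κ ι : Type*} [Finite κ] [Fintype ι]

lemma span_range_eq_top_of_pairwise_dotProduct_eq_zero {u : κ → ι → ℝ} (hu : ∀ a, u a ≠ 0)
    (horth : Pairwise fun a b => u a ⬝ᵥ u b = 0) :
    Submodule.span ℝ (Set.range fun i a => u a i) = ⊤ := by
  classical
  have := Fintype.ofFinite κ
  refine Submodule.eq_top_iff'.2 fun w => (Submodule.mem_span_range_iff_exists_fun ℝ).2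
    ⟨fun i => ∑ b, w b / (u b ⬝ᵥ u b) * u b i, ?_⟩
  ext a
  calc (∑ i, (∑ b, w b / (u b ⬝ᵥ u b) * u b i) • fun a => u a i) a
      = ∑ b, w b / (u b ⬝ᵥ u b) * (u b ⬝ᵥ u a) := by
        simp only [Finset.sum_apply, Pi.smul_apply, smul_eq_mul, Finset.sum_mul, dotProduct,
          Finset.mul_sum]
        rw [Finset.sum_comm]
        simp only [mul_assoc]
    _ = w a / (u a ⬝ᵥ u a) * (u a ⬝ᵥ u a) :=
        Fintype.sum_eq_single a fun b hb => by rw [horth hb, mul_zero]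
    _ = w a := div_mul_cancel₀ _ (dotProduct_self_eq_zero.not.2 (hu a))

lemma span_range_eq_top_of_pairwise_dotProduct_star_eq_zero {u : κ → ι → ℂ} (hu : ∀ a, u a ≠ 0)
    (hstar : Pairwise fun a b => u a ⬝ᵥ star (u b) = 0) (hbilin : ∀ a b, u a ⬝ᵥ u b = 0) :
    Submodule.span ℝ (Set.range fun i a => u a i) = ⊤ := by
  classical
  have := Fintype.ofFinite κ
  refine Submodule.eq_top_iff'.2 fun w => (Submodule.mem_span_range_iff_exists_fun ℝ).2 ?_
  let c (b : κ) : ℂ := w b / (u b ⬝ᵥ star (u b))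
  have hre : ∀ i, ((∑ b, 2 * (c b * conj (u b i)).re : ℝ) : ℂ) =
      ∑ b, (c b * conj (u b i) + conj (c b) * u b i) := fun i => by
    rw [Complex.ofReal_sum]
    refine Finset.sum_congr rfl fun b _ => ?_
    rw [← Complex.add_conj, map_mul, Complex.conj_conj]
  refine ⟨fun i => ∑ b, 2 * (c b * conj (u b i)).re, ?_⟩
  ext a
  calc (∑ i, (∑ b, 2 * (c b * conj (u b i)).re) • fun a => u a i) a
      = ∑ b, (c b * (u a ⬝ᵥ star (u b)) + conj (c b) * (u a ⬝ᵥ u b)) := by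
        simp only [Finset.sum_apply, Pi.smul_apply, Complex.real_smul, hre, Finset.sum_mul,
          dotProduct, Finset.mul_sum, ← Finset.sum_add_distrib, Pi.star_apply, ← starRingEnd_apply]
        rw [Finset.sum_comm]
        exact Finset.sum_congr rfl fun b _ => Finset.sum_congr rfl fun i _ => by ring
    _ = c a * (u a ⬝ᵥ star (u a)) := by
        simp only [hbilin, mul_zero, add_zero]
        exact Fintype.sum_eq_single a fun b hb => by rw [hstar hb.symm, mul_zero]
    _ = w a := div_mul_cancel₀ _ (dotProduct_self_star_eq_zero.not.2 (hu a))

end Frame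

/-! ### Frames -/

section BlockChar

open scoped Matrix

variable {p : ℕ} {K : Type*} [DecidableEq K] {e : K → ℕ}

/-- The exponent vector of the character of the product of the groups `(ZMod p) ^ e k` that is
induced by the character with exponent vector `t` of its factor number `k`. -/
def blockChar (k : K) (t : Fin (e k) → ZMod p) : (Σ k, Fin (e k)) → ZMod p :=
  fun i => Pi.single (M := fun k => Fin (e k) → ZMod p) k t i.1 i.2

lemma blockChar_self (k : K) (t : Fin (e k) → ZMod p) (i : Fin (e k)) :
    blockChar k t ⟨k, i⟩ = t i := by
  simp [blockChar]

lemma blockChar_of_ne {k k' : K} (h : k' ≠ k) (t : Fin (e k) → ZMod p) (i : Fin (e k')) :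
    blockChar k t ⟨k', i⟩ = 0 := by
  simp [blockChar, h]

lemma blockChar_zero (k : K) : blockChar k (0 : Fin (e k) → ZMod p) = 0 := by
  ext i
  simp [blockChar]

lemma blockChar_dotProduct [Fintype K] (k : K) (t : Fin (e k) → ZMod p)
    (g : (Σ k, Fin (e k)) → ZMod p) : blockChar k t ⬝ᵥ g = t ⬝ᵥ component g k := by
  rw [dotProduct, Fintype.sum_sigma, Fintype.sum_eq_single k fun k' hk' =>
    Finset.sum_eq_zero fun i _ => by rw [blockChar_of_ne hk', zero_mul]]
  simp only [blockChar_self, dotProduct, component]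

end BlockChar

section FrameVector

variable {p : ℕ} [NeZero p] {K : Type*} {e n : K → ℕ}

/-- The vector whose entries are the sums, over blocks of `charDegree p` consecutive join
coordinates of component `k`, of the Fourier coefficients at the character with exponent vector
`1`. -/
def frameVector (d : ℕ) (x : Weights p e n) (k : K) : Fin (d + 1) → ℂ :=
  fun j => ∑ c with Fin.val c / charDegree p = j, charSum 1 fun g => (x k c g : ℂ)

lemma frameVector_translate (d : ℕ) (γ : (Σ k, Fin (e k)) → ZMod p) (x : Weights p e n) (k : K) :
    frameVector d (translate γ x) k = dotChar 1 (component γ k) • frameVector d x k := by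
  ext j
  simp only [frameVector, translate_apply, Pi.smul_apply, smul_eq_mul, Finset.mul_sum]
  exact Finset.sum_congr rfl fun c _ =>
    charSum_comp_sub 1 (component γ k) fun g => (x k c g : ℂ)

lemma continuous_frameVector (d : ℕ) (k : K) :
    Continuous fun x : Weights p e n => frameVector d x k := by
  unfold frameVector charSum
  fun_prop

lemma IsJoinPoint.exists_forall_ne_eq_zero {x : Weights p e n} (hx : IsJoinPoint x) (k : K)
    (c : Fin (n k + 1)) : ∃ g, ∀ h, h ≠ g → x k c h = 0 := by
  by_cases hzero : ∀ h, x k c h = 0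
  · exact ⟨0, fun h _ => hzero h⟩
  · push Not at hzero
    obtain ⟨g, hg⟩ := hzero
    exact ⟨g, fun h hne => (_root_.mul_eq_zero.1 (hx.mul_eq_zero k c h g hne)).resolve_right hg⟩

lemma card_filter_div_eq_le {q : ℕ} (hq : 0 < q) (N j : ℕ) :
    (Finset.univ.filter fun c : Fin N => (c : ℕ) / q = j).card ≤ q := by
  calc (Finset.univ.filter fun c : Fin N => (c : ℕ) / q = j).card
      ≤ (Finset.range q).card := by
        refine Finset.card_le_card_of_injOn (fun c => (c : ℕ) % q)
          (fun c _ => by simpa using Nat.mod_lt _ hq) fun c hc c' hc' (h : _ % q = _ % q) =>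
            Fin.ext ?_
        simp only [Finset.coe_filter, Finset.mem_univ, true_and, Set.mem_ofPred_eq] at hc hc'
        rw [← Nat.div_add_mod (c : ℕ) q, ← Nat.div_add_mod (c' : ℕ) q, hc, hc', h]
    _ = q := Finset.card_range q

lemma IsJoinPoint.frameVector_ne_zero (hp : p = 2 ∨ Odd p) {x : Weights p e n}
    (hx : IsJoinPoint x) {d : ℕ} {k : K} (hn : n k ≤ charDegree p * d) :
    frameVector d x k ≠ 0 := by
  intro hzero
  choose g hg using hx.exists_forall_ne_eq_zero k
  have hslot : ∀ c, charSum 1 (fun h => (x k c h : ℂ)) =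
      (x k c (g c) : ℂ) * ZMod.stdAddChar (1 ⬝ᵥ g c) := fun c => by
    rw [charSum, Fintype.sum_eq_single (g c) fun h hne => by rw [hg c h hne]; simp, mul_comm,
      dotChar_apply]
  have hblock : ∀ c, x k c (g c) = 0 := by
    intro c
    have hj : (c : ℕ) / charDegree p < d + 1 := Nat.lt_succ_of_le <|
      Nat.div_le_of_le_mul ((Nat.le_of_lt_succ c.2).trans hn)
    have hsum := congrFun hzero ⟨(c : ℕ) / charDegree p, hj⟩
    simp only [frameVector, hslot, Pi.zero_apply] at hsum
    exact eq_zero_of_sum_mul_stdAddChar_eq_zero hp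
      (card_filter_div_eq_le (charDegree_pos p) _ _) (fun c _ => hx.nonneg k c (g c)) hsum c
      (by simp)
  have hall : ∀ c h, x k c h = 0 := fun c h => by
    rcases eq_or_ne h (g c) with rfl | hne
    · exact hblock c
    · exact hg c h hne
  simpa [hall] using hx.sum_eq_one k

lemma isSelfAdjoint_charSum {ι : Type*} [Fintype ι] [DecidableEq ι] (hp : p = 2)
    (t : ι → ZMod p) {A : (ι → ZMod p) → ℂ} (hA : ∀ g, IsSelfAdjoint (A g)) :
    IsSelfAdjoint (charSum t A) := by
  subst hp
  refine isSelfAdjoint_sum _ fun g _ => IsSelfAdjoint.mul ?_ (hA g)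
  rw [IsSelfAdjoint, ← starRingEnd_apply, ← dotChar_neg_apply,
    show -t = t from funext fun i => CharTwo.neg_eq (t i)]

lemma isSelfAdjoint_frameVector (hp : p = 2) (d : ℕ) (x : Weights p e n) (k : K) :
    IsSelfAdjoint (frameVector d x k) :=
  funext fun _ => isSelfAdjoint_sum _ fun _ _ =>
    isSelfAdjoint_charSum hp 1 fun _ => Complex.conj_ofReal _

end FrameVector

/-! ### Test maps -/

section TestIndex

open scoped Matrix

variable {ι : Type*} {p h : ℕ} {e : ι ⊕ Fin h → ℕ} {H : ∀ ℓ, Finset (Fin (e (.inl ℓ)) → ZMod p)}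

variable (p h e H) in
/-- The index set of the test maps: orthogonality of two frame vectors with respect to the
Hermitian form and, for odd `p`, the bilinear form; the Fourier coefficients of the distribution of
mass in a simplex, at the exponent vectors in `H`; and the Fourier coefficients of the pairing of a
frame vector with the images of the points of a simplex. -/
inductive TestIndex
  | hermitian (a b : Fin h) (hab : a < b)
  | bilinear (a b : Fin h) (hab : a ≤ b) (hp : p ≠ 2)
  | mass (ℓ : ι) (t : H ℓ)
  | incidence (ℓ : ι) (a : Fin h) (t : Fin (e (.inl ℓ)) → ZMod p)

namespace TestIndex

instance [Finite ι] [NeZero p] : Finite (TestIndex p h e H) :=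
  Finite.of_surjective (α := {ab : Fin h × Fin h // ab.1 < ab.2} ⊕
      {ab : Fin h × Fin h // ab.1 ≤ ab.2 ∧ p ≠ 2} ⊕ (Σ ℓ, H ℓ) ⊕
      (Σ ℓ, Fin h × (Fin (e (.inl ℓ)) → ZMod p)))
    (fun
      | .inl ab => hermitian ab.1.1 ab.1.2 ab.2
      | .inr (.inl ab) => bilinear ab.1.1 ab.1.2 ab.2.1 ab.2.2
      | .inr (.inr (.inl x)) => mass x.1 x.2
      | .inr (.inr (.inr x)) => incidence x.1 x.2.1 x.2.2)
    (by
      rintro (⟨a, b, hab⟩ | ⟨a, b, hab, hp⟩ | ⟨ℓ, t⟩ | ⟨ℓ, a, t⟩)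
      exacts [⟨.inl ⟨(a, b), hab⟩, rfl⟩, ⟨.inr (.inl ⟨(a, b), hab, hp⟩), rfl⟩,
        ⟨.inr (.inr (.inl ⟨ℓ, t⟩)), rfl⟩, ⟨.inr (.inr (.inr ⟨ℓ, a, t⟩)), rfl⟩])

open scoped Classical in
/-- The block of the product of joins in which the zeros of a test map are counted. -/
def leadingBlock : TestIndex p h e H → ι ⊕ Fin h
  | hermitian _ b _ => .inr b
  | bilinear _ b _ _ => .inr b
  | mass ℓ _ => .inl ℓ
  | incidence ℓ a t => if t = 0 then .inr a else .inl ℓ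

lemma leadingBlock_incidence_zero (ℓ : ι) (a : Fin h) :
    (incidence ℓ a 0 : TestIndex p h e H).leadingBlock = .inr a :=
  if_pos rfl

lemma leadingBlock_incidence_of_ne (ℓ : ι) (a : Fin h) {t : Fin (e (.inl ℓ)) → ZMod p}
    (ht : t ≠ 0) : (incidence ℓ a t : TestIndex p h e H).leadingBlock = .inl ℓ :=
  if_neg ht

lemma ncard_leadingBlock_eq_inl_le [NeZero p] (ℓ : ι) :
    {j : TestIndex p h e H | leadingBlock j = .inl ℓ}.ncard ≤
      (H ℓ).card + h * (p ^ e (.inl ℓ) - 1) := by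
  classical
  let param : H ℓ ⊕ Fin h × {t : Fin (e (.inl ℓ)) → ZMod p // t ≠ 0} → TestIndex p h e H :=
    Sum.elim (mass ℓ) fun at' => incidence ℓ at'.1 at'.2
  have hsub : {j : TestIndex p h e H | leadingBlock j = .inl ℓ} ⊆ Set.range param := by
    rintro (⟨a, b, hab⟩ | ⟨a, b, hab, hp⟩ | ⟨ℓ', t⟩ | ⟨ℓ', a, t⟩) hj
    · simp [leadingBlock] at hj
    · simp [leadingBlock] at hj
    · obtain rfl : ℓ' = ℓ := by simpa [leadingBlock] using hj
      exact ⟨.inl t, rfl⟩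
    · obtain ⟨ht, rfl⟩ : t ≠ 0 ∧ ℓ' = ℓ := by simpa [leadingBlock, ite_eq_iff] using hj
      exact ⟨.inr (a, ⟨t, ht⟩), rfl⟩
  calc _ ≤ (Set.range param).ncard := Set.ncard_le_ncard hsub
    _ ≤ Nat.card (H ℓ ⊕ Fin h × {t : Fin (e (.inl ℓ)) → ZMod p // t ≠ 0}) :=
      Finite.card_range_le param
    _ = _ := by simp [Nat.card_eq_fintype_card, Fintype.card_subtype_compl, ZMod.card]

lemma ncard_leadingBlock_eq_inr_le [Fintype ι] (b : Fin h) :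
    {j : TestIndex p h e H | leadingBlock j = .inr b}.ncard ≤
      b + (charDegree p - 1) * (b + 1) + Fintype.card ι := by
  let param : Finset.Iio b ⊕ {a // a ≤ b ∧ p ≠ 2} ⊕ ι → TestIndex p h e H :=
    Sum.elim (fun a => hermitian a b (Finset.mem_Iio.1 a.2)) <|
      Sum.elim (fun a => bilinear a b a.2.1 a.2.2) fun ℓ => incidence ℓ b 0
  have hsub : {j : TestIndex p h e H | leadingBlock j = .inr b} ⊆ Set.range param := by
    rintro (⟨a, b', hab⟩ | ⟨a, b', hab, hp⟩ | ⟨ℓ', t⟩ | ⟨ℓ', a, t⟩) hj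
    · obtain rfl : b' = b := by simpa [leadingBlock] using hj
      exact ⟨.inl ⟨a, Finset.mem_Iio.2 hab⟩, rfl⟩
    · obtain rfl : b' = b := by simpa [leadingBlock] using hj
      exact ⟨.inr (.inl ⟨a, hab, hp⟩), rfl⟩
    · simp [leadingBlock] at hj
    · obtain ⟨rfl, rfl⟩ : t = 0 ∧ a = b := by simpa [leadingBlock, ite_eq_iff] using hj
      exact ⟨.inr (.inr ℓ'), rfl⟩
  have hcard : Nat.card {a : Fin h // a ≤ b ∧ p ≠ 2} = (charDegree p - 1) * (b + 1) := by
    by_cases hp : p = 2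
    · simp [hp, charDegree]
    · simp [hp, charDegree, ← Finset.mem_Iic]
  calc _ ≤ (Set.range param).ncard := Set.ncard_le_ncard hsub
    _ ≤ Nat.card (Finset.Iio b ⊕ {a // a ≤ b ∧ p ≠ 2} ⊕ ι) := Finite.card_range_le param
    _ = _ := by
      rw [Nat.card_sum, Nat.card_sum, hcard, Nat.card_eq_fintype_card, Fintype.card_coe,
        Fin.card_Iio, Nat.card_eq_fintype_card, add_assoc]

variable [DecidableEq ι]

variable (p h e H) in
/-- The exponent vectors of the characters through which the product of the groups acts on the
values of the test maps. -/
def testChar : Matrix (TestIndex p h e H) (Σ k, Fin (e k)) (ZMod p)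
  | hermitian a b _ => blockChar (.inr b) 1 - blockChar (.inr a) 1
  | bilinear a b _ _ => blockChar (.inr b) 1 + blockChar (.inr a) 1
  | mass ℓ t => blockChar (.inl ℓ) t
  | incidence ℓ a t => blockChar (.inr a) 1 + blockChar (.inl ℓ) t

lemma exists_testChar_leadingBlock_ne_zero [Fact p.Prime] (he : ∀ a, e (.inr a) ≠ 0)
    (hH : ∀ ℓ, 0 ∉ H ℓ) (j : TestIndex p h e H) :
    ∃ i, testChar p h e H j ⟨leadingBlock j, i⟩ ≠ 0 := by
  have zeroIdx (a : Fin h) : Fin (e (.inr a)) := ⟨0, Nat.pos_of_ne_zero (he a)⟩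
  rcases j with ⟨a, b, hab⟩ | ⟨a, b, hab, hp⟩ | ⟨ℓ, t, ht⟩ | ⟨ℓ, a, t⟩
  · refine ⟨zeroIdx b, ?_⟩
    simp [testChar, leadingBlock, blockChar_self, blockChar_of_ne, hab.ne']
  · refine ⟨zeroIdx b, ?_⟩
    rcases eq_or_ne a b with rfl | hne
    · have : (1 : ZMod p) + 1 ≠ 0 := by
        rw [one_add_one_eq_two]
        exact Ring.two_ne_zero (by rwa [ZMod.ringChar_zmod_n])
      simpa [testChar, leadingBlock, blockChar_self] using this
    · simp [testChar, leadingBlock, blockChar_self, blockChar_of_ne, hne.symm]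
  · obtain ⟨i, hi⟩ := Function.ne_iff.1 (ne_of_mem_of_not_mem ht (hH ℓ))
    exact ⟨i, by simpa [testChar, leadingBlock, blockChar_self] using hi⟩
  · rcases eq_or_ne t 0 with rfl | ht
    · rw [leadingBlock_incidence_zero]
      exact ⟨zeroIdx a, by simp [testChar, blockChar_self, blockChar_of_ne]⟩
    · obtain ⟨i, hi⟩ := Function.ne_iff.1 ht
      rw [leadingBlock_incidence_of_ne ℓ a ht]
      exact ⟨i, by simpa [testChar, blockChar_self, blockChar_of_ne] using hi⟩

/-- An order of the blocks in which those of the simplices come after those of the frame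
vectors. -/
def blockRank (num : ι ↪ ℕ) : ι ⊕ Fin h ↪ ℕ where
  toFun := Sum.elim (fun ℓ => h + num ℓ) Fin.val
  inj' := by
    refine Function.Injective.sumElim (fun ℓ ℓ' hℓ => num.injective (Nat.add_left_cancel hℓ))
      Fin.val_injective fun ℓ a => ?_
    lia

lemma testChar_eq_zero_of_leadingBlock_lt (num : ι ↪ ℕ) {j : TestIndex p h e H} {k : ι ⊕ Fin h}
    (hk : blockRank num (leadingBlock j) < blockRank num k) (i : Fin (e k)) :
    testChar p h e H j ⟨k, i⟩ = 0 := by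
  have hne : ∀ k', blockRank num k' ≤ blockRank num (leadingBlock j) → k ≠ k' := by
    rintro k' hk' rfl
    exact hk.not_ge hk'
  have hinr : ∀ (a : Fin h) (ℓ : ι),
      blockRank num (.inr a : ι ⊕ Fin h) ≤ blockRank num (.inl ℓ : ι ⊕ Fin h) :=
    fun a ℓ => a.2.le.trans (Nat.le_add_right h (num ℓ))
  rcases j with ⟨a, b, hab⟩ | ⟨a, b, hab, hp⟩ | ⟨ℓ, t⟩ | ⟨ℓ, a, t⟩
  · simp [testChar, blockChar_of_ne (hne (.inr b) le_rfl),
      blockChar_of_ne (hne (.inr a) (Fin.val_fin_le.2 hab.le))]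
  · simp [testChar, blockChar_of_ne (hne (.inr b) le_rfl),
      blockChar_of_ne (hne (.inr a) (Fin.val_fin_le.2 hab))]
  · simp [testChar, blockChar_of_ne (hne (.inl ℓ) le_rfl)]
  · rcases eq_or_ne t 0 with rfl | ht
    · rw [leadingBlock_incidence_zero] at hne
      simp [testChar, blockChar_of_ne (hne (.inr a) le_rfl), blockChar_zero]
    · rw [leadingBlock_incidence_of_ne ℓ a ht] at hne
      simp [testChar, blockChar_of_ne (hne (.inl ℓ) le_rfl),
        blockChar_of_ne (hne (.inr a) (hinr a ℓ))]

end TestIndex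

end TestIndex

section TestMap

open scoped Matrix ComplexConjugate

variable {ι : Type*} {p h d : ℕ} [NeZero p] {e n : ι ⊕ Fin h → ℕ}
  {H : ∀ ℓ, Finset (Fin (e (.inl ℓ)) → ZMod p)}
  {F : ∀ ℓ : ι, (Fin (n (.inl ℓ) + 1) → ℝ) → Fin (d + 1) → ℝ}

/-- The pairing of the frame vector of block `k` with the image under `F` of the weights that the
group element `g` carries in block `k'`. -/
def framePairing {K : Type*} {e n : K → ℕ} (x : Weights p e n) (k k' : K)
    (F : (Fin (n k' + 1) → ℝ) → Fin (d + 1) → ℝ) (g : Fin (e k') → ZMod p) : ℂ :=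
  frameVector d x k ⬝ᵥ fun i => (F (fun c => x k' c g) i : ℂ)

variable (H F) in
/-- The test maps, whose common zero is the configuration from which the transversal is built. -/
def testMap : TestIndex p h e H → Weights p e n → ℂ
  | .hermitian a b _, x => frameVector d x (.inr b) ⬝ᵥ star (frameVector d x (.inr a))
  | .bilinear a b _ _, x => frameVector d x (.inr b) ⬝ᵥ frameVector d x (.inr a)
  | .mass ℓ t, x => charSum t fun g => ((∑ c, x (.inl ℓ) c g : ℝ) : ℂ)
  | .incidence ℓ a t, x => charSum t (framePairing x (.inr a) (.inl ℓ) (F ℓ))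

lemma framePairing_translate {K : Type*} {e n : K → ℕ} (γ : (Σ k, Fin (e k)) → ZMod p)
    (x : Weights p e n) (k k' : K) (F : (Fin (n k' + 1) → ℝ) → Fin (d + 1) → ℝ)
    (g : Fin (e k') → ZMod p) :
    framePairing (translate γ x) k k' F g =
      dotChar 1 (component γ k) * framePairing x k k' F (g - component γ k') := by
  simp only [framePairing, frameVector_translate, smul_dotProduct, smul_eq_mul, translate_apply]

lemma framePairing_homogenize {K : Type*} {e n : K → ℕ} (x : Weights p e n) (k k' : K)
    (G : EuclideanSpace ℝ (Fin (n k' + 1)) → Fin (d + 1) → ℝ) (g : Fin (e k') → ZMod p) :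
    framePairing x k k' (homogenize G) g = ((∑ c, x k' c g : ℝ) : ℂ) *
      (frameVector d x k ⬝ᵥ fun i => (G (normalize fun c => x k' c g) i : ℂ)) := by
  simp only [framePairing, homogenize, dotProduct, Pi.smul_apply, smul_eq_mul, Complex.ofReal_mul,
    Finset.mul_sum, mul_left_comm]

lemma testMap_translate [DecidableEq ι] [Fintype ι] (j : TestIndex p h e H)
    (γ : (Σ k, Fin (e k)) → ZMod p) (x : Weights p e n) :
    testMap H F j (translate γ x) =
      ZMod.stdAddChar ((TestIndex.testChar p h e H *ᵥ γ) j) * testMap H F j x := by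
  have hblock : ∀ k t, ZMod.stdAddChar (blockChar k t ⬝ᵥ γ) = dotChar t (component γ k) :=
    fun k t => by rw [blockChar_dotProduct, dotChar_apply]
  change _ = ZMod.stdAddChar (TestIndex.testChar p h e H j ⬝ᵥ γ) * _
  rcases j with ⟨a, b, hab⟩ | ⟨a, b, hab, hp⟩ | ⟨ℓ, t⟩ | ⟨ℓ, a, t⟩
  · simp only [testMap, TestIndex.testChar, frameVector_translate, star_smul, smul_dotProduct,
      dotProduct_smul, smul_eq_mul, sub_dotProduct]
    rw [sub_eq_add_neg, AddChar.map_add_eq_mul, AddChar.map_neg_eq_conj, hblock, hblock,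
      starRingEnd_apply]
    ring
  · simp only [testMap, TestIndex.testChar, frameVector_translate, smul_dotProduct,
      dotProduct_smul, smul_eq_mul, add_dotProduct, AddChar.map_add_eq_mul, hblock]
    ring
  · simp only [testMap, TestIndex.testChar, hblock, translate_apply]
    exact charSum_comp_sub t.1 (component γ (.inl ℓ)) fun g => ((∑ c, x (.inl ℓ) c g : ℝ) : ℂ)
  · simp only [testMap, TestIndex.testChar, add_dotProduct, AddChar.map_add_eq_mul, hblock]
    rw [mul_assoc, ← charSum_comp_sub, charSum, charSum, Finset.mul_sum]
    exact Finset.sum_congr rfl fun g _ => by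
      rw [framePairing_translate, mul_left_comm]

lemma continuousOn_testMap (hF : ∀ ℓ, ContinuousOn (F ℓ) {y | ∀ c, 0 ≤ y c})
    (j : TestIndex p h e H) : ContinuousOn (testMap H F j) (joinProduct p e n) := by
  have hu : ∀ k, Continuous fun x : Weights p e n => frameVector d x k :=
    continuous_frameVector d
  rcases j with ⟨a, b, _⟩ | ⟨a, b, _, _⟩ | ⟨ℓ, t⟩ | ⟨ℓ, a, t⟩
  · exact ((hu _).dotProduct (hu _).star).continuousOn
  · exact ((hu _).dotProduct (hu _)).continuousOn
  · unfold testMap charSum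
    exact Continuous.continuousOn (by fun_prop)
  · have hFx : ∀ g, ContinuousOn (fun x : Weights p e n => F ℓ fun c => x (.inl ℓ) c g)
        (joinProduct p e n) := fun g =>
      (hF ℓ).comp (f := fun (x : Weights p e n) c => x (.inl ℓ) c g) (by fun_prop) fun x hx c =>
        hx.nonneg (.inl ℓ) c g
    unfold testMap charSum framePairing dotProduct
    refine continuousOn_finsetSum _ fun g _ => continuousOn_const.mul ?_
    refine continuousOn_finsetSum _ fun i _ => ContinuousOn.mul ?_ ?_
    · exact ((continuous_apply i).comp (hu _)).continuousOn
    · exact Complex.continuous_ofReal.comp_continuousOn (continuousOn_pi.1 (hFx g) i)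

lemma im_testMap_eq_zero (hp : p = 2) (j : TestIndex p h e H) (x : Weights p e n) :
    (testMap H F j x).im = 0 := by
  have hu : ∀ k i, IsSelfAdjoint (frameVector d x k i) :=
    fun k => Pi.isSelfAdjoint.1 (isSelfAdjoint_frameVector hp d x k)
  rw [← Complex.conj_eq_iff_im]
  rcases j with ⟨a, b, _⟩ | ⟨a, b, _, _⟩ | ⟨ℓ, t⟩ | ⟨ℓ, a, t⟩
  · exact isSelfAdjoint_sum _ fun i _ => (hu _ i).mul (IsSelfAdjoint.star_iff.2 (hu _ i))
  · exact isSelfAdjoint_sum _ fun i _ => (hu _ i).mul (hu _ i)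
  · exact isSelfAdjoint_charSum hp _ fun _ => Complex.conj_ofReal _
  · exact isSelfAdjoint_charSum hp _ fun _ =>
      isSelfAdjoint_sum _ fun i _ => (hu _ i).mul (Complex.conj_ofReal _)

lemma TestIndex.charDegree_mul_ncard_leadingBlock_le [Fintype ι]
    (hd : Fintype.card ι + charDegree p * h ≤ d + 1)
    (hframe : ∀ a, charDegree p * d ≤ n (.inr a))
    (hsimplex : ∀ ℓ, (p ^ e (.inl ℓ) - 1) * (1 + charDegree p * h) ≤ n (.inl ℓ))
    (hH : ∀ ℓ, charDegree p * (H ℓ).card ≤ p ^ e (.inl ℓ) - 1) (k : ι ⊕ Fin h) :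
    charDegree p * {j : TestIndex p h e H | j.leadingBlock = k}.ncard ≤ n k := by
  rcases k with ℓ | b
  · calc _ ≤ charDegree p * ((H ℓ).card + h * (p ^ e (.inl ℓ) - 1)) :=
        Nat.mul_le_mul_left _ (ncard_leadingBlock_eq_inl_le ℓ)
      _ = charDegree p * (H ℓ).card + (p ^ e (.inl ℓ) - 1) * (charDegree p * h) := by ring
      _ ≤ (p ^ e (.inl ℓ) - 1) * (1 + charDegree p * h) := by
        rw [mul_add, mul_one]
        exact Nat.add_le_add_right (hH ℓ) _
      _ ≤ n (.inl ℓ) := hsimplex ℓ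
  · refine (Nat.mul_le_mul_left _ ?_).trans (hframe b)
    refine (ncard_leadingBlock_eq_inr_le b).trans ?_
    obtain ⟨q, hq⟩ := Nat.exists_eq_add_one.2 (charDegree_pos p)
    have hb : (q + 1) * (b + 1) ≤ (q + 1) * h := Nat.mul_le_mul_left _ b.2
    rw [hq] at hd ⊢
    simp only [Nat.add_sub_cancel]
    lia

end TestMap

open scoped Matrix in
theorem exists_orthogonal_frame {ι : Type*} [Fintype ι] {p h d : ℕ} [Fact p.Prime]
    {e n : ι ⊕ Fin h → ℕ} (he : ∀ a, e (.inr a) ≠ 0)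
    (hd : Fintype.card ι + charDegree p * h ≤ d + 1)
    (hframe : ∀ a, charDegree p * d ≤ n (.inr a))
    (hsimplex : ∀ ℓ, (p ^ e (.inl ℓ) - 1) * (1 + charDegree p * h) ≤ n (.inl ℓ))
    {F : ∀ ℓ : ι, (Fin (n (.inl ℓ) + 1) → ℝ) → Fin (d + 1) → ℝ}
    (hF : ∀ ℓ, ContinuousOn (F ℓ) {y | ∀ c, 0 ≤ y c}) :
    ∃ x ∈ joinProduct p e n,
      (∀ ℓ g, ∑ c, x (.inl ℓ) c g = ((p : ℝ) ^ e (.inl ℓ))⁻¹) ∧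
      (∀ ℓ a g, framePairing x (.inr a) (.inl ℓ) (F ℓ) g = 0) ∧
      (Pairwise fun a b => frameVector d x (.inr a) ⬝ᵥ star (frameVector d x (.inr b)) = 0) ∧
      (p ≠ 2 → ∀ a b, frameVector d x (.inr a) ⬝ᵥ frameVector d x (.inr b) = 0) := by
  classical
  obtain ⟨num⟩ := nonempty_embedding_nat ι
  choose H hH₀ hHneg hHcard using fun ℓ =>
    exists_finset_charDegree_mul_card_le p (Fin (e (.inl ℓ)))
  simp only [Fintype.card_fin] at hHcard
  obtain ⟨x, hx, hzero⟩ := borsuk_ulam_joins (TestIndex.blockRank num)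
    (TestIndex.exists_testChar_leadingBlock_ne_zero he hH₀)
    (fun j k hk => TestIndex.testChar_eq_zero_of_leadingBlock_lt num hk)
    (TestIndex.charDegree_mul_ncard_leadingBlock_le hd hframe hsimplex hHcard)
    (continuousOn_testMap hF) (fun j γ x _ => testMap_translate j γ x)
    (fun hp j x _ => im_testMap_eq_zero hp j x)
  refine ⟨x, hx, fun ℓ g => ?_, fun ℓ a => ?_, ?_, fun hp a b => ?_⟩
  · have hmass : charSum 0 (fun g => ((∑ c, x (.inl ℓ) c g : ℝ) : ℂ)) = 1 := by
      simp only [charSum, dotChar_zero_apply, one_mul]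
      rw [← Complex.ofReal_sum, Finset.sum_comm, hx.sum_eq_one, Complex.ofReal_one]
    simpa using eq_inv_card_of_charSum_eq_zero (hHneg ℓ) hmass
      (fun t ht => hzero (.mass ℓ ⟨t, ht⟩)) g
  · exact congrFun (eq_zero_of_forall_charSum_eq_zero fun t => hzero (.incidence ℓ a t))
  · intro a b hab
    rcases hab.lt_or_gt with h | h
    · rw [← star_eq_zero, ← Matrix.star_dotProduct_star, star_star]
      exact hzero (.hermitian a b h)
    · exact hzero (.hermitian b a h)
  · rcases le_total a b with h | h
    · rw [dotProduct_comm]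
      exact hzero (.bilinear a b h hp)
    · exact hzero (.bilinear b a h hp)

/-! ### Transversals -/

section TverbergFaces

variable {V : Type*}

/-- The map `f` on the standard simplex sends a point of each of `r` pairwise disjoint faces
into `L`. -/
def HasTverbergFaces {N : ℕ} (r : ℕ) (f : EuclideanSpace ℝ (Fin (N + 1)) → V) (L : Set V) : Prop :=
  ∃ σ : Fin r → Finset (Fin (N + 1)), (∀ j, (σ j).Nonempty) ∧
    (∀ j j', j ≠ j' → Disjoint (σ j) (σ j')) ∧ ∀ j, (f '' simpFace N (σ j) ∩ L).Nonempty

lemma hasTverbergFaces_iff {N r : ℕ} {f : EuclideanSpace ℝ (Fin (N + 1)) → V} {L : Set V} :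
    HasTverbergFaces r f L ↔ ∃ x : Fin r → EuclideanSpace ℝ (Fin (N + 1)),
      (∀ j, x j ∈ stdSimp N) ∧ (Pairwise fun j j' => ∀ i, x j i = 0 ∨ x j' i = 0) ∧
      ∀ j, f (x j) ∈ L := by
  constructor
  · rintro ⟨σ, -, hσ, hL⟩
    choose y hy hyL using hL
    choose x hx hxy using hy
    refine ⟨x, fun j => (hx j).1, fun j j' hj i => ?_, fun j => hxy j ▸ hyL j⟩
    by_contra! h
    exact Finset.disjoint_left.1 (hσ j j' hj) ((hx j).2 i h.1) ((hx j').2 i h.2)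
  · rintro ⟨x, hx, hdisj, hL⟩
    refine ⟨fun j => {i | x j i ≠ 0}, fun j => ?_, fun j j' hj => ?_, fun j =>
      ⟨f (x j), ⟨x j, ⟨hx j, by simp⟩, rfl⟩, hL j⟩⟩
    · obtain ⟨i, -, hi⟩ := Finset.exists_ne_zero_of_sum_ne_zero ((hx j).2.trans_ne one_ne_zero)
      exact ⟨i, by simpa using hi⟩
    · refine Finset.disjoint_left.2 fun i hi hi' => ?_
      simp only [Finset.mem_filter, Finset.mem_univ, true_and] at hi hi'
      exact (hdisj hj i).elim hi hi'

end TverbergFaces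

section Transversal

open scoped Matrix

lemma exists_affineSubspace_of_frame {κ : Type*} [Fintype κ] {p d : ℕ}
    {u : κ → Fin (d + 1) → ℂ} (hu : ∀ a, u a ≠ 0)
    (hstar : Pairwise fun a b => u a ⬝ᵥ star (u b) = 0)
    (hbilin : p ≠ 2 → ∀ a b, u a ⬝ᵥ u b = 0) (hreal : p = 2 → ∀ a, IsSelfAdjoint (u a))
    {v : EuclideanSpace ℝ (Fin d)} (hv : ∀ a, u a ⬝ᵥ (fun i => (homogeneousCoords v i : ℂ)) = 0) :
    ∃ L : AffineSubspace ℝ (EuclideanSpace ℝ (Fin d)),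
      (L : Set (EuclideanSpace ℝ (Fin d))).Nonempty ∧
      charDegree p * Fintype.card κ + Module.finrank ℝ L.direction = d ∧
      ∀ v', (∀ a, u a ⬝ᵥ (fun i => (homogeneousCoords v' i : ℂ)) = 0) → v' ∈ L := by
  by_cases hp : p = 2
  · choose w hw using fun a i =>
      Complex.conj_eq_iff_real.1 (congrFun (hreal hp a) i : star (u a i) = u a i)
    obtain rfl : u = fun a i => (w a i : ℂ) := funext₂ hw
    have hpair : ∀ a (y : Fin (d + 1) → ℝ),
        (fun i => (w a i : ℂ)) ⬝ᵥ (fun i => (y i : ℂ)) = ((w a ⬝ᵥ y : ℝ) : ℂ) := fun a y => by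
      simp [dotProduct]
    have hstar' : ∀ a, star (fun i => (w a i : ℂ)) = fun i => (w a i : ℂ) := hreal hp
    simp only [hpair, hstar', Complex.ofReal_eq_zero] at hv hstar ⊢
    have hsum : ∀ v' : EuclideanSpace ℝ (Fin d),
        (∑ i, homogeneousCoords v' i • (fun a => w a i) = 0) ↔
          ∀ a, w a ⬝ᵥ homogeneousCoords v' = 0 := fun v' => by
      simp [funext_iff, dotProduct, mul_comm]
    simp only [← hsum] at hv ⊢
    have hspan := span_range_eq_top_of_pairwise_dotProduct_eq_zero
      (fun a h => hu a (funext fun i => by simp [h])) hstar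
    simpa [hp, charDegree] using exists_affineSubspace_of_span_eq_top hspan hv
  · have hsum : ∀ v' : EuclideanSpace ℝ (Fin d),
        (∑ i, homogeneousCoords v' i • (fun a => u a i) = 0) ↔
          ∀ a, u a ⬝ᵥ (fun i => (homogeneousCoords v' i : ℂ)) = 0 := fun v' => by
      simp [funext_iff, dotProduct, mul_comm]
    simp only [← hsum] at hv ⊢
    have hspan := span_range_eq_top_of_pairwise_dotProduct_star_eq_zero hu hstar (hbilin hp)
    have hfinrank : Module.finrank ℝ (κ → ℂ) = charDegree p * Fintype.card κ := by
      rw [Module.finrank_pi_fintype]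
      simp [hp, charDegree, mul_comm]
    exact hfinrank ▸ exists_affineSubspace_of_span_eq_top hspan hv

theorem exists_transversal_of_charDegree_mul_le {ι : Type*} [Fintype ι] [Nonempty ι] {p h d : ℕ}
    [Fact p.Prime] (hd : Fintype.card ι + charDegree p * h ≤ d + 1) {e N : ι → ℕ}
    (hN : ∀ ℓ, (p ^ e ℓ - 1) * (1 + charDegree p * h) ≤ N ℓ)
    {f : ∀ ℓ : ι, EuclideanSpace ℝ (Fin (N ℓ + 1)) → EuclideanSpace ℝ (Fin d)}
    (hf : ∀ ℓ, ContinuousOn (f ℓ) (stdSimp (N ℓ))) :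
    ∃ L : AffineSubspace ℝ (EuclideanSpace ℝ (Fin d)),
      (L : Set (EuclideanSpace ℝ (Fin d))).Nonempty ∧
      charDegree p * h + Module.finrank ℝ L.direction = d ∧
      ∀ ℓ, HasTverbergFaces (p ^ e ℓ) (f ℓ) L := by
  have hp : p.Prime := Fact.out
  obtain ⟨x, hx, hmass, hpair, hstar, hbilin⟩ := exists_orthogonal_frame (p := p)
    (e := Sum.elim e fun _ : Fin h => 1) (n := Sum.elim N fun _ => charDegree p * d)
    (F := fun ℓ => homogenize (homogeneousCoords ∘ f ℓ)) (fun _ => one_ne_zero) hd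
    (fun _ => le_rfl) hN
    fun ℓ => continuousOn_homogenize (continuous_homogeneousCoords.comp_continuousOn (hf ℓ))
  let pt (ℓ : ι) (g : Fin (e ℓ) → ZMod p) : EuclideanSpace ℝ (Fin (N ℓ + 1)) :=
    normalize fun c => x (.inl ℓ) c g
  have hmass_ne : ∀ ℓ (g : Fin (e ℓ) → ZMod p), ∑ c, x (.inl ℓ) c g ≠ 0 := fun ℓ g => by
    rw [hmass ℓ g]
    exact inv_ne_zero (pow_ne_zero _ (Nat.cast_ne_zero.2 hp.ne_zero))
  have hpt : ∀ ℓ g a, frameVector d x (.inr a) ⬝ᵥ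
      (fun i => (homogeneousCoords (f ℓ (pt ℓ g)) i : ℂ)) = 0 := fun ℓ g a => by
    have hmul := (framePairing_homogenize x (.inr a) (.inl ℓ) (homogeneousCoords ∘ f ℓ) g).symm
    exact (mul_eq_zero.1 (hmul.trans (hpair ℓ a g))).resolve_left
      (Complex.ofReal_ne_zero.2 (hmass_ne ℓ g))
  obtain ⟨ℓ₀⟩ := ‹Nonempty ι›
  obtain ⟨L, hne, hfinrank, hL⟩ := exists_affineSubspace_of_frame
    (fun a => hx.frameVector_ne_zero hp.eq_two_or_odd' le_rfl) hstar hbilin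
    (fun hp a => isSelfAdjoint_frameVector hp d x (.inr a)) (hpt ℓ₀ 0)
  rw [Fintype.card_fin] at hfinrank
  refine ⟨L, hne, hfinrank, fun ℓ => hasTverbergFaces_iff.2 ?_⟩
  let num : Fin (p ^ e ℓ) ≃ (Fin (e ℓ) → ZMod p) := (Fintype.equivFinOfCardEq (by simp)).symm
  refine ⟨fun j => pt ℓ (num j), fun j =>
    normalize_mem_stdSimp (fun c => hx.nonneg (.inl ℓ) c (num j)) (hmass_ne ℓ _),
    fun j j' hj c => ?_, fun j => hL _ (hpt ℓ _)⟩
  exact (mul_eq_zero.1 (hx.mul_eq_zero (.inl ℓ) c _ _ (num.injective.ne hj))).imp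
    (normalize_apply_eq_zero ·) (normalize_apply_eq_zero ·)

end Transversal

section Cone

variable {N n d : ℕ}

/-- The extension of a map on the standard simplex to a simplex with additional vertices, all of
which it sends to the origin of `ℝ ^ (d + 1)`, where `ℝ ^ d` is placed at height `1`. -/
def coneExtension (hn : N ≤ n) (f : EuclideanSpace ℝ (Fin (N + 1)) → EuclideanSpace ℝ (Fin d))
    (x : EuclideanSpace ℝ (Fin (n + 1))) : EuclideanSpace ℝ (Fin (d + 1)) :=
  WithLp.toLp 2 <|
    homogenize (homogeneousCoords ∘ f) fun c => x (Fin.castLE (Nat.succ_le_succ hn) c)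

lemma continuousOn_coneExtension (hn : N ≤ n)
    {f : EuclideanSpace ℝ (Fin (N + 1)) → EuclideanSpace ℝ (Fin d)}
    (hf : ContinuousOn f (stdSimp N)) : ContinuousOn (coneExtension hn f) (stdSimp n) :=
  (PiLp.continuous_toLp 2 _).comp_continuousOn <|
    (continuousOn_homogenize (continuous_homogeneousCoords.comp_continuousOn hf)).comp
      (by fun_prop) fun _ hx _ => hx.1 _

lemma coneExtension_last (hn : N ≤ n)
    (f : EuclideanSpace ℝ (Fin (N + 1)) → EuclideanSpace ℝ (Fin d))
    (x : EuclideanSpace ℝ (Fin (n + 1))) :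
    coneExtension hn f x (Fin.last d) = ∑ c, x (Fin.castLE (Nat.succ_le_succ hn) c) := by
  simp [coneExtension, homogenize, homogeneousCoords]

lemma coneExtension_of_sum_eq_one (hn : N ≤ n)
    (f : EuclideanSpace ℝ (Fin (N + 1)) → EuclideanSpace ℝ (Fin d))
    {x : EuclideanSpace ℝ (Fin (n + 1))}
    (hx : ∑ c, x (Fin.castLE (Nat.succ_le_succ hn) c) = 1) :
    coneExtension hn f x = WithLp.toLp 2 (homogeneousCoords
      (f (normalize fun c => x (Fin.castLE (Nat.succ_le_succ hn) c)))) := by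
  rw [coneExtension, homogenize, hx, one_smul, Function.comp_apply]

lemma exists_sum_castLE_eq_one {r : ℕ} (hn : N ≤ n) (hr : n - N < r)
    {x : Fin r → EuclideanSpace ℝ (Fin (n + 1))} (hx : ∀ j, x j ∈ stdSimp n)
    (hdisj : Pairwise fun j j' => ∀ i, x j i = 0 ∨ x j' i = 0) :
    ∃ j, ∑ c, x j (Fin.castLE (Nat.succ_le_succ hn) c) = 1 := by
  obtain ⟨j, hj⟩ : ∃ j, ∀ i : Fin (n + 1), N < i → x j i = 0 := by
    by_contra! h
    choose i hi hne using h
    have hinj : Function.Injective i := fun j j' hjj' => by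
      by_contra hne'
      exact (hdisj hne' (i j)).elim (hne j) (hjj' ▸ hne j')
    have hcard := Finset.card_le_card_of_injOn (s := Finset.univ) (fun j => (i j : ℕ))
      (t := Finset.Ioc N n) (fun j _ => Finset.mem_coe.2 <|
        Finset.mem_Ioc.2 ⟨hi j, Nat.le_of_lt_succ (i j).2⟩) (Fin.val_injective.comp hinj).injOn
    rw [Finset.card_univ, Fintype.card_fin, Nat.card_Ioc] at hcard
    exact hr.not_ge hcard
  refine ⟨j, (Fintype.sum_of_injective _ (Fin.castLE_injective _) _ _ (fun i hi => hj i ?_)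
    fun _ => rfl).trans (hx j).2⟩
  by_contra! hi'
  exact hi ⟨⟨i, Nat.lt_succ_of_le hi'⟩, rfl⟩

lemma HasTverbergFaces.of_coneExtension {r : ℕ} {hn : N ≤ n} (hr : n - N < r)
    {f : EuclideanSpace ℝ (Fin (N + 1)) → EuclideanSpace ℝ (Fin d)}
    {L : Set (EuclideanSpace ℝ (Fin (d + 1)))} (hL : L.Subsingleton)
    (h : HasTverbergFaces r (coneExtension hn f) L) : ∃ w, HasTverbergFaces r f {w} := by
  obtain ⟨x, hx, hdisj, hxL⟩ := hasTverbergFaces_iff.1 h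
  obtain ⟨j₀, hj₀⟩ := exists_sum_castLE_eq_one hn hr hx hdisj
  have hsum : ∀ j, ∑ c, x j (Fin.castLE (Nat.succ_le_succ hn) c) = 1 := fun j => by
    rw [← coneExtension_last hn f, hL (hxL j) (hxL j₀), coneExtension_last, hj₀]
  let y (j : Fin r) := normalize fun c => x j (Fin.castLE (Nat.succ_le_succ hn) c)
  have hy : ∀ j, f (y j) = f (y j₀) := fun j => by
    have heq := hL (hxL j) (hxL j₀)
    rw [coneExtension_of_sum_eq_one hn f (hsum j), coneExtension_of_sum_eq_one hn f hj₀] at heq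
    exact homogeneousCoords_injective (WithLp.toLp_injective 2 heq)
  refine ⟨f (y j₀), hasTverbergFaces_iff.2 ⟨y, fun j => normalize_mem_stdSimp
    (fun c => (hx j).1 _) ((hsum j).trans_ne one_ne_zero), fun j j' hj c => ?_, hy⟩⟩
  exact (hdisj hj _).imp (normalize_apply_eq_zero ·) (normalize_apply_eq_zero ·)

end Cone

theorem exists_tverberg_point {p h d e N : ℕ} [Fact p.Prime] (hd : d + 1 = charDegree p * h)
    (hN : (p ^ e - 1) * (d + 1) ≤ N)
    {f : EuclideanSpace ℝ (Fin (N + 1)) → EuclideanSpace ℝ (Fin d)}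
    (hf : ContinuousOn f (stdSimp N)) : ∃ w, HasTverbergFaces (p ^ e) f {w} := by
  have hn : N ≤ N + (p ^ e - 1) := Nat.le_add_right _ _
  have hr : N + (p ^ e - 1) - N < p ^ e := by
    have := Nat.pow_pos (n := e) (Fact.out : p.Prime).pos
    lia
  obtain ⟨L, -, hfinrank, hL⟩ := exists_transversal_of_charDegree_mul_le (ι := Unit) (p := p)
    (h := h) (d := d + 1) (e := fun _ => e) (f := fun _ => coneExtension hn f)
    (by simp; lia) (fun _ => by
      rw [← hd, mul_add, mul_one, add_comm]
      exact Nat.add_le_add_right hN _)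
    fun _ => continuousOn_coneExtension hn hf
  have hdir : L.direction = ⊥ := Submodule.finrank_eq_zero.1 (Nat.add_eq_left.1 (hfinrank.trans hd))
  refine (hL ()).of_coneExtension hr fun v hv w hw => ?_
  rw [← vsub_eq_zero_iff_eq, ← Submodule.mem_bot ℝ, ← hdir]
  exact AffineSubspace.vsub_mem_direction hv hw

end TransversalTverberg

open TransversalTverberg in
/-- The topological transversal Tverberg theorem for prime powers. -/
theorem topological_transversal_tverberg_prime_powers
    (m d p : ℕ) (hp : p.Prime) (hmd : m < d)
    (e : Fin (m + 1) → ℕ)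
    (heven : Even (p * (d - m)) ∨ m = 0)
    (N : Fin (m + 1) → ℕ) (hN : ∀ ℓ, N ℓ = (p ^ e ℓ - 1) * (d + 1 - m))
    (f : ∀ ℓ : Fin (m + 1), EuclideanSpace ℝ (Fin (N ℓ + 1)) → EuclideanSpace ℝ (Fin d))
    (hf : ∀ ℓ, ContinuousOn (f ℓ) (stdSimp (N ℓ))) :
    ∃ L : AffineSubspace ℝ (EuclideanSpace ℝ (Fin d)),
      (L : Set (EuclideanSpace ℝ (Fin d))).Nonempty ∧
      Module.finrank ℝ L.direction = m ∧
      ∀ ℓ : Fin (m + 1), ∃ σ : Fin (p ^ e ℓ) → Finset (Fin (N ℓ + 1)),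
        (∀ j, (σ j).Nonempty) ∧
        (∀ j j', j ≠ j' → Disjoint (σ j) (σ j')) ∧
        (∀ j, (f ℓ '' simpFace (N ℓ) (σ j) ∩ (L : Set (EuclideanSpace ℝ (Fin d)))).Nonempty) := by
  have : Fact p.Prime := ⟨hp⟩
  by_cases hdvd : charDegree p ∣ d - m
  · obtain ⟨h, hh⟩ := hdvd
    obtain ⟨L, hne, hfinrank, hL⟩ := exists_transversal_of_charDegree_mul_le (p := p) (h := h)
      (by rw [Fintype.card_fin, ← hh]; lia) (fun ℓ => by rw [hN, ← hh]; gcongr; lia) hf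
    rw [← hh] at hfinrank
    exact ⟨L, hne, Nat.add_left_cancel (hfinrank.trans (Nat.sub_add_cancel hmd.le).symm), hL⟩
  · obtain rfl := heven.resolve_left ((charDegree_dvd_iff_even_mul hp).not.1 hdvd)
    obtain ⟨h, hh⟩ := (charDegree_dvd_or_dvd_add_one p d).resolve_left hdvd
    obtain ⟨w, hw⟩ := exists_tverberg_point hh (hN 0).ge (hf 0)
    refine ⟨affineSpan ℝ {w}, by simp, ?_, fun ℓ => ?_⟩
    · rw [direction_affineSpan, vectorSpan_singleton, finrank_bot]
    · obtain rfl := Fin.fin_one_eq_zero ℓ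
      rwa [AffineSubspace.coe_affineSpan_singleton]
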